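/- For every nonnegative integer n, the number sT(5n+3) of partition pairs (π₁,π₂) ∈ 𝒮𝒯 with |π₁|+|π₂| = 5n+3 is divisible by 5. -/

import Mathlib

open scoped BigOperators

noncomputable section

/-- A partition is a finite multiset of positive integers. -/
def IsPartition (π : Multiset ℕ) : Prop := ∀ x ∈ π, 0 < x

/-- The smallest part of a partition, with the convention `s(∅) = ∞`. -/
def sPart (π : Multiset ℕ) : ℕ∞ := (π.map (fun x => (x : ℕ∞))).inf

/-- The largest part of a partition, with the convention `ℓ(∅) = 0`. -/
def lPart (π : Multiset ℕ) : ℕ := π.sup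

/-- Membership in the set 𝒮𝒯 of partition pairs: π₁ is nonempty,
`s(π₁) ≤ s(π₂)`, and `ℓ(π₂) < 2·s(π₁)`. -/
def InST (p : Multiset ℕ × Multiset ℕ) : Prop :=
  IsPartition p.1 ∧ IsPartition p.2 ∧ p.1 ≠ 0 ∧
    sPart p.1 ≤ sPart p.2 ∧ (lPart p.2 : ℕ∞) < 2 * sPart p.1

/-- `sT n` is the number of pairs `(π₁, π₂) ∈ 𝒮𝒯` with `|π₁| + |π₂| = n`. -/
def sT (n : ℕ) : ℕ :=
  {p : Multiset ℕ × Multiset ℕ | InST p ∧ p.1.sum + p.2.sum = n}.ncard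

/-!
Let `G = ∑ sT(n) q ^ n`. Grouping pairs by the smallest part of `π₁` gives
`(q)_∞ G = ∑_N q ^ (N + 1) (q)_N ² / (q)_{2N+1}`. A finite form of Jacobi's identity expands
`(q)_N ²`, and summing over `N` by the Durfee identity turns `(q)_∞ ³ G` into the Hecke-type series
`∑_{i,j ≥ 0} (2i + 1) (-1) ^ (i + j) q ^ (T_i + i + 1 + T_j + (2i + 1) j)`, `T_i = i (i + 1) / 2`.

After `q ↦ q ^ 24` the powers `(q)_∞` and `(q)_∞ ³` become theta series by Euler and Jacobi, and the
Hecke series becomes an indefinite binary theta series `H`. Reflections of the ternary form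
`u² + 3b² - 9d²` give `η H = -η³ K`, where `K` is a theta series over a second cone; hence
`4 η G(q ^ 24) = q ^ 9 K`.

Modulo 5, split everything by exponents mod 5. The eta parts satisfy `η₁ η₄ = -η₀²`, a quaternary
lattice identity relates the parts of `K`, and the part of `H` with exponents `0` mod 5 vanishes.
Eliminating the other parts of `G(q ^ 24)` leaves a nonzero multiple of its part with exponents
`2` mod 5 equal to zero, and `24 (5n + 3) ≡ 2`.
-/

open PowerSeries

section ThetaSeries

variable {R S ι κ : Type*} [CommRing R] [CommRing S]

/-- The generating series `∑ᵢ w i * q ^ E i` of a weight `w` along an integer-valued exponent `E`.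
It has this meaning only for `IsAdmissible` data: negative exponents are dropped, and `finsum`
returns `0` on infinite sums. -/
def thetaSeries (E : ι → ℤ) (w : ι → R) : R⟦X⟧ :=
  .mk fun n => ∑ᶠ i, if E i = n then w i else 0

/-- The exponents carrying a nonzero weight are nonnegative and take each value finitely often, so
that `thetaSeries E w` is the sum of all the terms `w i * q ^ E i`. -/
structure IsAdmissible (E : ι → ℤ) (w : ι → R) : Prop where
  finite : ∀ N : ℕ, {i | E i ≤ N ∧ w i ≠ 0}.Finite
  nonneg : ∀ i, w i ≠ 0 → 0 ≤ E i

theorem coeff_thetaSeries (E : ι → ℤ) (w : ι → R) (n : ℕ) :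
    coeff n (thetaSeries E w) = ∑ᶠ i, if E i = n then w i else 0 :=
  coeff_mk _ _

namespace IsAdmissible

variable {E : ι → ℤ} {E' : κ → ℤ} {w : ι → R} {w' : κ → R}

theorem mono {v : ι → S} (h : IsAdmissible E w) (hv : ∀ i, v i ≠ 0 → w i ≠ 0) :
    IsAdmissible E v where
  finite N := (h.finite N).subset fun i hi => ⟨hi.1, hv i hi.2⟩
  nonneg i hi := h.nonneg i (hv i hi)

theorem of_abs_le {η : Type*} [Finite η] [Nonempty η] {f : ι → η → ℤ} (hf : Function.Injective f)
    (h : ∀ i, w i ≠ 0 → ∀ j, |f i j| ≤ E i) : IsAdmissible E w where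
  finite N := by
    classical
    have := Fintype.ofFinite η
    refine ((Set.finite_Icc (fun _ => -(N : ℤ)) fun _ => (N : ℤ)).preimage hf.injOn).subset ?_
    rintro i ⟨hE, hw⟩
    exact ⟨fun j => (abs_le.mp ((h i hw j).trans hE)).1,
      fun j => (abs_le.mp ((h i hw j).trans hE)).2⟩
  nonneg i hw := (abs_nonneg _).trans (h i hw (Classical.arbitrary η))

theorem add {v : ι → R} (h : IsAdmissible E w) (hv : IsAdmissible E v) :
    IsAdmissible E (w + v) := by
  have ne_zero_or {i} (hi : (w + v) i ≠ 0) : w i ≠ 0 ∨ v i ≠ 0 := by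
    by_contra! h0
    exact hi (by rw [Pi.add_apply, h0.1, h0.2, add_zero])
  refine ⟨fun N => ((h.finite N).union (hv.finite N)).subset fun i hi => ?_, fun i hi => ?_⟩
  · exact (ne_zero_or hi.2).imp (And.intro hi.1) (And.intro hi.1)
  · exact (ne_zero_or hi).elim (h.nonneg i) (hv.nonneg i)

theorem mul_left (h : IsAdmissible E w) (φ : ι → R) : IsAdmissible E (φ * w) :=
  h.mono fun _ => right_ne_zero_of_mul

theorem map (h : IsAdmissible E w) (f : R →+* S) : IsAdmissible E (f ∘ w) :=
  h.mono fun i hi hw => hi (by rw [Function.comp_apply, hw, map_zero])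

theorem comp_injective (h : IsAdmissible E' w') {f : ι → κ} (hf : Function.Injective f) :
    IsAdmissible (E' ∘ f) (w' ∘ f) where
  finite N := (h.finite N).preimage hf.injOn
  nonneg i := h.nonneg (f i)

theorem of_comp_injective {f : ι → κ} (h : IsAdmissible (E' ∘ f) (w' ∘ f))
    (hw : Function.support w' ⊆ Set.range f) : IsAdmissible E' w' where
  finite N := by
    refine ((h.finite N).image f).subset fun k hk => ?_
    obtain ⟨i, rfl⟩ := hw hk.2
    exact ⟨i, hk, rfl⟩
  nonneg k hk := by
    obtain ⟨i, rfl⟩ := hw hk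
    exact h.nonneg i hk

theorem mul (h : IsAdmissible E w) (h' : IsAdmissible E' w') :
    IsAdmissible (fun p : ι × κ => E p.1 + E' p.2) (fun p => w p.1 * w' p.2) where
  finite N := by
    refine ((h.finite N).prod (h'.finite N)).subset ?_
    rintro ⟨i, j⟩ ⟨hle, hne⟩
    have hi := left_ne_zero_of_mul hne
    have hj := right_ne_zero_of_mul hne
    have := h.nonneg i hi
    have := h'.nonneg j hj
    exact ⟨⟨by linarith, hi⟩, ⟨by linarith, hj⟩⟩
  nonneg p hp := add_nonneg (h.nonneg _ (left_ne_zero_of_mul hp))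
    (h'.nonneg _ (right_ne_zero_of_mul hp))

theorem finite_support (h : IsAdmissible E w) (n : ℕ) :
    (Function.support fun i => if E i = n then w i else 0).Finite := by
  refine (h.finite n).subset fun i hi => ?_
  obtain ⟨hE, hw⟩ := ite_ne_right_iff.mp hi
  exact ⟨hE.le, hw⟩

theorem coeff_eq_coeff_sum_monomial (h : IsAdmissible E w) {s : Finset ι} {n : ℕ}
    (hs : ∀ i, E i ≤ n → w i ≠ 0 → i ∈ s) (hs' : ∀ i ∈ s, w i ≠ 0) :
    coeff n (thetaSeries E w) = coeff n (∑ i ∈ s, monomial (E i).toNat (w i)) := by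
  classical
  have hsupp : (Function.support fun i => if E i = n then w i else 0) ⊆ s := fun i hi => by
    obtain ⟨hE, hw⟩ := ite_ne_right_iff.mp hi
    exact hs i hE.le hw
  rw [coeff_thetaSeries, finsum_eq_sum_of_support_subset _ hsupp, map_sum]
  refine Finset.sum_congr rfl fun i hi => ?_
  have := h.nonneg i (hs' i hi)
  rw [coeff_monomial]
  exact if_congr (by omega) rfl rfl

end IsAdmissible

theorem thetaSeries_mul {E : ι → ℤ} {E' : κ → ℤ} {w : ι → R} {w' : κ → R}
    (h : IsAdmissible E w) (h' : IsAdmissible E' w') :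
    thetaSeries E w * thetaSeries E' w' =
      thetaSeries (fun p : ι × κ => E p.1 + E' p.2) (fun p => w p.1 * w' p.2) := by
  classical
  ext N
  set s := (h.finite N).toFinset
  set t := (h'.finite N).toFinset
  have mem_s {i} : i ∈ s ↔ E i ≤ N ∧ w i ≠ 0 := (h.finite N).mem_toFinset
  have mem_t {j} : j ∈ t ↔ E' j ≤ N ∧ w' j ≠ 0 := (h'.finite N).mem_toFinset
  have truncate : coeff N (thetaSeries E w * thetaSeries E' w') =
      coeff N ((∑ i ∈ s, monomial (E i).toNat (w i)) * ∑ j ∈ t, monomial (E' j).toNat (w' j)) := by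
    rw [coeff_mul, coeff_mul]
    refine Finset.sum_congr rfl fun p hp => ?_
    have hp := Finset.HasAntidiagonal.mem_antidiagonal.mp hp
    rw [h.coeff_eq_coeff_sum_monomial (fun i hi hw => mem_s.mpr ⟨by omega, hw⟩)
        fun i hi => (mem_s.mp hi).2,
      h'.coeff_eq_coeff_sum_monomial (fun j hj hw => mem_t.mpr ⟨by omega, hw⟩)
        fun j hj => (mem_t.mp hj).2]
  have hsupp : (Function.support fun p : ι × κ =>
      if E p.1 + E' p.2 = N then w p.1 * w' p.2 else 0) ⊆ ↑(s ×ˢ t) := fun p hp => by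
    obtain ⟨hE, hw⟩ := ite_ne_right_iff.mp hp
    have hi := left_ne_zero_of_mul hw
    have hj := right_ne_zero_of_mul hw
    have := h.nonneg _ hi
    have := h'.nonneg _ hj
    rw [Finset.coe_product]
    exact ⟨mem_s.mpr ⟨by linarith, hi⟩, mem_t.mpr ⟨by linarith, hj⟩⟩
  rw [truncate, coeff_thetaSeries, finsum_eq_sum_of_support_subset _ hsupp, Finset.sum_mul_sum,
    ← Finset.sum_product', map_sum]
  refine Finset.sum_congr rfl fun p hp => ?_
  obtain ⟨hi, hj⟩ := Finset.mem_product.mp hp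
  have := h.nonneg _ (mem_s.mp hi).2
  have := h'.nonneg _ (mem_t.mp hj).2
  rw [monomial_mul_monomial, coeff_monomial]
  exact if_congr (by omega) rfl rfl

theorem thetaSeries_comp_injective {E : κ → ℤ} {w : κ → R} {f : ι → κ}
    (hf : Function.Injective f) (hw : Function.support w ⊆ Set.range f) :
    thetaSeries (E ∘ f) (w ∘ f) = thetaSeries E w := by
  ext n
  rw [coeff_thetaSeries, coeff_thetaSeries]
  refine (finsum_mem_range (f := fun k => if E k = n then w k else 0) hf).symm.trans ?_
  refine finsum_mem_inter_support _ _ |>.symm.trans ?_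
  rw [Set.inter_eq_self_of_subset_right, finsum_mem_support]
  exact fun k hk => hw (ite_ne_right_iff.mp hk).2

theorem thetaSeries_comp_involutive {E : ι → ℤ} {σ : ι → ι} (hσ : Function.Involutive σ)
    (hE : ∀ i, E (σ i) = E i) (w : ι → R) : thetaSeries E (w ∘ σ) = thetaSeries E w := by
  conv_lhs => rw [← show E ∘ σ = E from funext hE]
  exact thetaSeries_comp_injective hσ.injective fun i _ => hσ.surjective i

theorem map_thetaSeries {E : ι → ℤ} {w : ι → R} (h : IsAdmissible E w) (f : R →+* S) :
    map f (thetaSeries E w) = thetaSeries E (f ∘ w) := by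
  ext n
  rw [coeff_map, coeff_thetaSeries, coeff_thetaSeries, map_finsum f (h.finite_support n)]
  exact finsum_congr fun i => by rw [apply_ite f, map_zero, Function.comp_apply]

theorem thetaSeries_add {E : ι → ℤ} {v w : ι → R} (hv : IsAdmissible E v)
    (hw : IsAdmissible E w) : thetaSeries E (v + w) = thetaSeries E v + thetaSeries E w := by
  ext n
  rw [map_add, coeff_thetaSeries, coeff_thetaSeries, coeff_thetaSeries,
    ← finsum_add_distrib (hv.finite_support n) (hw.finite_support n)]
  exact finsum_congr fun i => by rw [Pi.add_apply, ite_add_ite, add_zero]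

theorem thetaSeries_neg (E : ι → ℤ) (w : ι → R) : thetaSeries E (-w) = -thetaSeries E w := by
  ext n
  rw [map_neg, coeff_thetaSeries, coeff_thetaSeries, ← finsum_neg_distrib]
  exact finsum_congr fun i => by rw [Pi.neg_apply, neg_ite, neg_zero]

theorem thetaSeries_eq_zero_of_comp_eq_neg [NoZeroDivisors R] (two_ne_zero : (2 : R) ≠ 0)
    {E : ι → ℤ} {w : ι → R} {σ : ι → ι} (hσ : Function.Involutive σ) (hE : ∀ i, E (σ i) = E i)
    (hw : w ∘ σ = -w) : thetaSeries E w = 0 := by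
  have h := thetaSeries_comp_involutive hσ hE w
  rw [hw, thetaSeries_neg] at h
  ext n
  have hn := congrArg (coeff n) h
  rw [map_neg] at hn
  have two_mul : 2 * coeff n (thetaSeries E w) = 0 := by linear_combination -hn
  exact (mul_eq_zero.mp two_mul).resolve_left two_ne_zero

/-- For an admissible kernel `k`, the linear map `φ ↦ ∑ᵢ φ i * k i * q ^ E i`. -/
def IsAdmissible.thetaMap {E : ι → ℤ} {k : ι → R} (h : IsAdmissible E k) :
    (ι → R) →ₗ[R] R⟦X⟧ where
  toFun φ := thetaSeries E (φ * k)
  map_add' φ ψ := by rw [add_mul, thetaSeries_add (h.mul_left φ) (h.mul_left ψ)]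
  map_smul' c φ := by
    ext n
    rw [RingHom.id_apply, map_smul, coeff_thetaSeries, coeff_thetaSeries,
      smul_finsum' c ((h.mul_left φ).finite_support n)]
    exact finsum_congr fun i => by rw [smul_mul_assoc, Pi.smul_apply, smul_ite, smul_zero]

end ThetaSeries

instance charZero_powerSeries {R : Type*} [CommRing R] [CharZero R] : CharZero R⟦X⟧ :=
  charZero_of_injective_ringHom C_injective

/-- The nontrivial Dirichlet character mod 3, as a function on `ℤ`. -/
def χ₃ (x : ℤ) : ℤ := quadraticChar (ZMod 3) x

/-- The nontrivial Dirichlet character mod 4, as a function on `ℤ`. -/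
def χ₄ (x : ℤ) : ℤ := ZMod.χ₄ x

/-- The even primitive Dirichlet character mod 12, as a function on `ℤ`. -/
def χ₁₂ (x : ℤ) : ℤ := χ₃ x * χ₄ x

theorem χ₃_neg (x : ℤ) : χ₃ (-x) = -χ₃ x := by
  have : ∀ z : ZMod 3, quadraticChar (ZMod 3) (-z) = -quadraticChar (ZMod 3) z := by decide
  simp only [χ₃, Int.cast_neg, this]

theorem χ₄_neg (x : ℤ) : χ₄ (-x) = -χ₄ x := by
  have : ∀ z : ZMod 4, ZMod.χ₄ (-z) = -ZMod.χ₄ z := by decide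
  simp only [χ₄, Int.cast_neg, this]

theorem χ₁₂_neg (x : ℤ) : χ₁₂ (-x) = χ₁₂ x := by
  rw [χ₁₂, χ₃_neg, χ₄_neg, neg_mul_neg, χ₁₂]

theorem emod_three_ne_zero_of_χ₃_ne_zero {x : ℤ} (h : χ₃ x ≠ 0) : x % 3 ≠ 0 := fun hx => h <| by
  rw [χ₃, (ZMod.intCast_zmod_eq_zero_iff_dvd x 3).mpr (Int.dvd_of_emod_eq_zero hx),
    MulChar.map_zero]

theorem odd_of_χ₄_ne_zero {x : ℤ} (h : χ₄ x ≠ 0) : x % 2 = 1 := by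
  rw [χ₄, ZMod.χ₄_int_eq_if_mod_four] at h
  split_ifs at h <;> omega

theorem χ₁₂_ne_zero_imp {x : ℤ} (h : χ₁₂ x ≠ 0) : x % 2 = 1 ∧ x % 3 ≠ 0 :=
  ⟨odd_of_χ₄_ne_zero (right_ne_zero_of_mul h),
    emod_three_ne_zero_of_χ₃_ne_zero (left_ne_zero_of_mul h)⟩

theorem mul_pos_of_sign_add_sign_ne_zero {x y : ℤ} (hx : x ≠ 0) (hy : y ≠ 0)
    (h : x.sign + y.sign ≠ 0) : 0 < x * y := by
  rcases hx.lt_or_gt with hx | hx <;> rcases hy.lt_or_gt with hy | hy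
  · exact mul_pos_of_neg_of_neg hx hy
  · simp [Int.sign_eq_neg_one_of_neg hx, Int.sign_eq_one_of_pos hy] at h
  · simp [Int.sign_eq_one_of_pos hx, Int.sign_eq_neg_one_of_neg hy] at h
  · exact mul_pos hx hy

theorem abs_le_of_sq_le {x M : ℤ} (h : x ^ 2 ≤ M) : |x| ≤ M :=
  (x.abs_eq_natAbs ▸ x.natAbs_le_self_sq).trans h

namespace Ternary

/-- The ternary quadratic form `u² + 3b² - 9d²`. -/
def form : ℤ × ℤ × ℤ → ℤ
  | (u, b, d) => u ^ 2 + 3 * b ^ 2 - 9 * d ^ 2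

/-- The character by which sums over the ternary lattice are twisted. -/
def char : ℤ × ℤ × ℤ → ℤ
  | (u, b, d) => χ₁₂ u * χ₄ b * χ₄ d

/-- Reflection of the ternary form in the vector `(0, 3, 1)`. -/
def reflRho : ℤ × ℤ × ℤ → ℤ × ℤ × ℤ
  | (u, b, d) => (u, 3 * d - 2 * b, 2 * d - b)

/-- Reflection of the ternary form in the vector `(3, 1, 1)`. -/
def reflSigma : ℤ × ℤ × ℤ → ℤ × ℤ × ℤ
  | (u, b, d) => (u - 6 * (u + b - 3 * d), b - 2 * (u + b - 3 * d), d - 2 * (u + b - 3 * d))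

/-- The sign kernel cutting out the cone `0 < d(b - 2d)`. -/
def coneBD : ℤ × ℤ × ℤ → ℤ
  | (_, b, d) => d.sign + (b - 2 * d).sign

/-- The sign kernel cutting out the cone `0 < d(u - 3d)`. -/
def coneUD : ℤ × ℤ × ℤ → ℤ
  | (u, _, d) => d.sign + (u - 3 * d).sign

/-- The difference of `coneBD` and of `coneUD` antisymmetrised under `reflRho`. -/
def coneDiff : ℤ × ℤ × ℤ → ℤ
  | (u, b, d) => (u + 3 * b - 6 * d).sign - (u - 3 * d).sign

theorem reflRho_involutive : Function.Involutive reflRho := by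
  rintro ⟨u, b, d⟩
  simp only [reflRho, Prod.mk.injEq, true_and]
  constructor <;> ring

theorem reflSigma_involutive : Function.Involutive reflSigma := by
  rintro ⟨u, b, d⟩
  simp only [reflSigma, Prod.mk.injEq]
  refine ⟨?_, ?_, ?_⟩ <;> ring

theorem form_reflRho (x : ℤ × ℤ × ℤ) : form (reflRho x) = form x := by
  simp only [form, reflRho]
  ring

theorem form_reflSigma (x : ℤ × ℤ × ℤ) : form (reflSigma x) = form x := by
  simp only [form, reflSigma]
  ring

theorem char_comp_reflRho : char ∘ reflRho = char := by
  have h : ∀ b d : ZMod 4,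
    ZMod.χ₄ (3 * d - 2 * b) * ZMod.χ₄ (2 * d - b) = ZMod.χ₄ b * ZMod.χ₄ d := by decide
  funext ⟨u, b, d⟩
  have := h b d
  simp only [Function.comp_apply, char, reflRho, mul_assoc, χ₄]
  push_cast
  rw [this]

theorem char_comp_reflSigma : char ∘ reflSigma = -char := by
  have h : ∀ u b d : ZMod 4, ZMod.χ₄ (u - 6 * (u + b - 3 * d)) *
      ZMod.χ₄ (b - 2 * (u + b - 3 * d)) * ZMod.χ₄ (d - 2 * (u + b - 3 * d)) =
      -(ZMod.χ₄ u * ZMod.χ₄ b * ZMod.χ₄ d) := by decide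
  have h6 : (6 : ZMod 3) = 0 := rfl
  funext ⟨u, b, d⟩
  have := h u b d
  simp only [Function.comp_apply, Pi.neg_apply, char, reflSigma, χ₁₂, χ₄, χ₃]
  push_cast
  rw [h6, zero_mul, sub_zero, mul_assoc, mul_assoc, ← mul_assoc (ZMod.χ₄ _), this]
  ring

theorem coneDiff_comp_reflRho : coneDiff ∘ reflRho = -coneDiff := by
  funext ⟨u, b, d⟩
  simp only [Function.comp_apply, Pi.neg_apply, coneDiff, reflRho]
  ring_nf

theorem coneDiff_comp_reflSigma : coneDiff ∘ reflSigma = coneDiff := by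
  funext ⟨u, b, d⟩
  simp only [Function.comp_apply, coneDiff, reflSigma]
  ring_nf

theorem coneDiff_eq : coneDiff = coneBD - coneUD + coneUD ∘ reflRho := by
  funext ⟨u, b, d⟩
  simp only [Pi.add_apply, Pi.sub_apply, Function.comp_apply, coneDiff, coneBD, coneUD, reflRho]
  rw [show 2 * d - b = -(b - 2 * d) by ring, Int.sign_neg]
  ring_nf

theorem isAdmissible_char_mul_coneBD : IsAdmissible form (char * coneBD) := by
  refine .of_abs_le (f := fun x => ![x.1, x.2.1 - 2 * x.2.2, x.2.2]) ?_ ?_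
  · rintro ⟨u, b, d⟩ ⟨u', b', d'⟩ h
    simp only [Matrix.vecCons_inj, and_true, Prod.mk.injEq] at h ⊢
    omega
  · rintro ⟨u, b, d⟩ h
    have hchar := left_ne_zero_of_mul (M₀ := ℤ) h
    have hb := odd_of_χ₄_ne_zero (right_ne_zero_of_mul (left_ne_zero_of_mul hchar))
    have hd := odd_of_χ₄_ne_zero (right_ne_zero_of_mul hchar)
    have hpos := mul_pos_of_sign_add_sign_ne_zero (by omega) (by omega)
      (right_ne_zero_of_mul (M₀ := ℤ) h)
    have hform : form (u, b, d) =
        u ^ 2 + 3 * (b - 2 * d) ^ 2 + 3 * d ^ 2 + 12 * (d * (b - 2 * d)) := by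
      simp only [form]
      ring
    rw [hform, Fin.forall_fin_succ, Fin.forall_fin_two]
    refine ⟨(abs_le_of_sq_le ?_ : |u| ≤ _), (abs_le_of_sq_le ?_ : |b - 2 * d| ≤ _),
      (abs_le_of_sq_le ?_ : |d| ≤ _)⟩ <;>
      nlinarith [sq_nonneg u, sq_nonneg (b - 2 * d), sq_nonneg d]

theorem isAdmissible_char_mul_coneUD : IsAdmissible form (char * coneUD) := by
  refine .of_abs_le (f := fun x => ![x.1 - 3 * x.2.2, x.2.1, x.2.2]) ?_ ?_
  · rintro ⟨u, b, d⟩ ⟨u', b', d'⟩ h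
    simp only [Matrix.vecCons_inj, and_true, Prod.mk.injEq] at h ⊢
    omega
  · rintro ⟨u, b, d⟩ h
    have hchar := left_ne_zero_of_mul (M₀ := ℤ) h
    have hu := (χ₁₂_ne_zero_imp (left_ne_zero_of_mul (left_ne_zero_of_mul hchar))).2
    have hd := odd_of_χ₄_ne_zero (right_ne_zero_of_mul hchar)
    have hud : u - 3 * d ≠ 0 := by omega
    have hpos := mul_pos_of_sign_add_sign_ne_zero (by omega) hud
      (right_ne_zero_of_mul (M₀ := ℤ) h)
    have hdle : |d| ≤ d * (u - 3 * d) := by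
      rw [← abs_of_pos hpos, abs_mul]
      exact le_mul_of_one_le_right (abs_nonneg d) (Int.one_le_abs hud)
    have hform : form (u, b, d) = 3 * b ^ 2 + (u - 3 * d) ^ 2 + 6 * (d * (u - 3 * d)) := by
      simp only [form]
      ring
    rw [hform, Fin.forall_fin_succ, Fin.forall_fin_two]
    refine ⟨(abs_le_of_sq_le ?_ : |u - 3 * d| ≤ _), (abs_le_of_sq_le ?_ : |b| ≤ _),
      (hdle.trans ?_ : |d| ≤ _)⟩ <;>
      nlinarith [sq_nonneg b, sq_nonneg (u - 3 * d)]

theorem isAdmissible_char_mul_coneUD_comp_reflRho :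
    IsAdmissible form (char * coneUD ∘ reflRho) := by
  rw [← char_comp_reflRho, ← funext form_reflRho]
  exact isAdmissible_char_mul_coneUD.comp_injective reflRho_involutive.injective

theorem isAdmissible_char_mul_coneDiff : IsAdmissible form (char * coneDiff) := by
  have hneg := isAdmissible_char_mul_coneUD.mul_left (-1)
  have hkernel : char * coneDiff =
      char * coneBD + -1 * (char * coneUD) + char * coneUD ∘ reflRho := by
    rw [coneDiff_eq]
    ring
  rw [hkernel]
  exact (isAdmissible_char_mul_coneBD.add hneg).add isAdmissible_char_mul_coneUD_comp_reflRho

theorem thetaSeries_coneDiff_comp_reflRho (φ : ℤ × ℤ × ℤ → ℤ) :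
    thetaSeries form (φ ∘ reflRho * (char * coneDiff)) =
      -thetaSeries form (φ * (char * coneDiff)) := by
  rw [← thetaSeries_comp_involutive reflRho_involutive form_reflRho (φ * _), ← thetaSeries_neg]
  congr 1
  change _ = -(φ ∘ reflRho * (char ∘ reflRho * coneDiff ∘ reflRho))
  rw [char_comp_reflRho, coneDiff_comp_reflRho]
  ring

theorem thetaSeries_coneDiff_comp_reflSigma (φ : ℤ × ℤ × ℤ → ℤ) :
    thetaSeries form (φ ∘ reflSigma * (char * coneDiff)) =
      -thetaSeries form (φ * (char * coneDiff)) := by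
  rw [← thetaSeries_comp_involutive reflSigma_involutive form_reflSigma (φ * _),
    ← thetaSeries_neg]
  congr 1
  change _ = -(φ ∘ reflSigma * (char ∘ reflSigma * coneDiff ∘ reflSigma))
  rw [char_comp_reflSigma, coneDiff_comp_reflSigma]
  ring

theorem thetaSeries_coneDiff_eq_zero :
    thetaSeries form ((fun x => x.2.1 - 2 * x.2.2) * (char * coneDiff)) = 0 := by
  let C := isAdmissible_char_mul_coneDiff.thetaMap
  let e : ℤ × ℤ × ℤ → ℤ := fun x => x.2.1 - 2 * x.2.2
  let f : ℤ × ℤ × ℤ → ℤ := fun x => x.2.2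
  let k : ℤ × ℤ × ℤ → ℤ := fun x => x.1 + x.2.1 - 3 * x.2.2
  have rho_e : e ∘ reflRho = -f := by
    funext ⟨u, b, d⟩
    simp only [Function.comp_apply, Pi.neg_apply, reflRho, e, f]
    ring
  have sigma_e : e ∘ reflSigma = e + (2 : ℤ) • k := by
    funext ⟨u, b, d⟩
    simp only [Function.comp_apply, Pi.add_apply, Pi.smul_apply, smul_eq_mul, reflSigma, e, k]
    ring
  have sigma_f : f ∘ reflSigma = f - (2 : ℤ) • k := by
    funext ⟨u, b, d⟩
    simp only [Function.comp_apply, Pi.sub_apply, Pi.smul_apply, smul_eq_mul, reflSigma, f, k]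
  have C_rho : C (e ∘ reflRho) = -C e := thetaSeries_coneDiff_comp_reflRho e
  have C_sigma_e : C (e ∘ reflSigma) = -C e := thetaSeries_coneDiff_comp_reflSigma e
  have C_sigma_f : C (f ∘ reflSigma) = -C f := thetaSeries_coneDiff_comp_reflSigma f
  rw [rho_e, map_neg] at C_rho
  rw [sigma_e, map_add, map_smul, zsmul_eq_mul] at C_sigma_e
  rw [sigma_f, map_sub, map_smul, zsmul_eq_mul] at C_sigma_f
  have four_mul : (4 : ℤ⟦X⟧) * C e = 0 := by
    push_cast at *
    linear_combination C_sigma_e + C_sigma_f + 2 * C_rho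
  exact (mul_eq_zero.mp four_mul).resolve_left (OfNat.ofNat_ne_zero 4)

theorem thetaSeries_coneUD_eq_zero :
    thetaSeries form ((fun x => x.2.2) * (char * coneUD)) = 0 := by
  let negB : ℤ × ℤ × ℤ → ℤ × ℤ × ℤ := fun x => (x.1, -x.2.1, x.2.2)
  have hodd : ((fun x => x.2.2) * (char * coneUD)) ∘ negB =
      -((fun x => x.2.2) * (char * coneUD)) := by
    funext ⟨u, b, d⟩
    simp only [Function.comp_apply, Pi.neg_apply, Pi.mul_apply, char, coneUD, negB, χ₄_neg]
    ring
  have hform (x) : form (negB x) = form x := by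
    simp only [form, negB, neg_sq]
  exact thetaSeries_eq_zero_of_comp_eq_neg two_ne_zero
    (fun x => by simp only [negB, neg_neg]) hform hodd

theorem thetaSeries_coneBD_eq_coneUD :
    thetaSeries form ((fun x => x.2.1 - 2 * x.2.2) * (char * coneBD)) =
      thetaSeries form ((fun x => x.2.1) * (char * coneUD)) := by
  let e : ℤ × ℤ × ℤ → ℤ := fun x => x.2.1 - 2 * x.2.2
  let f : ℤ × ℤ × ℤ → ℤ := fun x => x.2.2
  have hUD := isAdmissible_char_mul_coneUD
  have hUD' := isAdmissible_char_mul_coneUD_comp_reflRho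
  have hDiff := isAdmissible_char_mul_coneDiff
  have kernel_eq : e * (char * coneBD) =
      e * (char * coneUD) + -(e * (char * coneUD ∘ reflRho)) + e * (char * coneDiff) := by
    rw [coneDiff_eq]
    ring
  have rho_eq : -(e * (char * coneUD ∘ reflRho)) = (f * (char * coneUD)) ∘ reflRho := by
    change _ = f ∘ reflRho * (char ∘ reflRho * coneUD ∘ reflRho)
    rw [char_comp_reflRho, ← neg_mul]
    congr 1
    funext ⟨u, b, d⟩
    simp only [Pi.neg_apply, Function.comp_apply, e, f, reflRho]
    ring
  have hrho : IsAdmissible form ((f * (char * coneUD)) ∘ reflRho) := by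
    rw [← rho_eq, ← neg_mul]
    exact hUD'.mul_left _
  have e_eq : e = (fun x => x.2.1) + (-2 : ℤ) • f := by
    funext x
    simp only [Pi.add_apply, Pi.smul_apply, smul_eq_mul, e, f]
    ring
  have map_e : thetaSeries form (e * (char * coneUD)) =
      thetaSeries form ((fun x => x.2.1) * (char * coneUD)) := by
    change hUD.thetaMap e = hUD.thetaMap _
    rw [e_eq, map_add, map_smul]
    change _ + (-2 : ℤ) • thetaSeries form (f * (char * coneUD)) = _
    rw [thetaSeries_coneUD_eq_zero, smul_zero, add_zero]
  rw [kernel_eq, rho_eq, thetaSeries_add ((hUD.mul_left e).add hrho) (hDiff.mul_left e),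
    thetaSeries_add (hUD.mul_left e) hrho,
    thetaSeries_comp_involutive reflRho_involutive form_reflRho, thetaSeries_coneUD_eq_zero,
    thetaSeries_coneDiff_eq_zero, map_e, add_zero, add_zero]

end Ternary

theorem isAdmissible_χ₁₂ : IsAdmissible (fun u : ℤ => u ^ 2) χ₁₂ := by
  refine .of_abs_le (f := fun u _ => u) (η := Unit) (fun u v h => congrFun h ()) ?_
  exact fun u _ _ => abs_le_of_sq_le le_rfl

/-- The weight `χ₁₂ u * χ₄ c`, restricted to `3 ∣ c` and to the cone `0 < c(u - c)`. -/
def coneWeight (p : ℤ × ℤ) : ℤ :=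
  χ₁₂ p.1 * χ₄ p.2 * (if 3 ∣ p.2 then 1 else 0) * (p.2.sign - (p.2 - p.1).sign)

theorem isAdmissible_coneWeight : IsAdmissible (fun p : ℤ × ℤ => p.1 ^ 2 - p.2 ^ 2) coneWeight := by
  refine .of_abs_le (f := fun p => ![p.1 - p.2, p.2]) ?_ ?_
  · rintro ⟨u, c⟩ ⟨u', c'⟩ h
    simp only [Matrix.vecCons_inj, and_true, Prod.mk.injEq] at h ⊢
    omega
  · rintro ⟨u, c⟩ h
    have hcone : c.sign - (c - u).sign ≠ 0 := right_ne_zero_of_mul h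
    have h3c : 3 ∣ c := (ite_ne_right_iff.mp (right_ne_zero_of_mul (left_ne_zero_of_mul h))).1
    have hchar : χ₁₂ u * χ₄ c ≠ 0 := left_ne_zero_of_mul (left_ne_zero_of_mul h)
    have hu := (χ₁₂_ne_zero_imp (left_ne_zero_of_mul hchar)).2
    have hc := odd_of_χ₄_ne_zero (right_ne_zero_of_mul hchar)
    have huc : u - c ≠ 0 := by omega
    have hpos : 0 < c * (u - c) := by
      refine mul_pos_of_sign_add_sign_ne_zero (by omega) huc ?_
      rwa [← neg_sub c u, Int.sign_neg, ← sub_eq_add_neg]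
    have hcle : |c| ≤ c * (u - c) := by
      rw [← abs_of_pos hpos, abs_mul]
      exact le_mul_of_one_le_right (abs_nonneg c) (Int.one_le_abs huc)
    have hform : u ^ 2 - c ^ 2 = (u - c) ^ 2 + 2 * (c * (u - c)) := by ring
    rw [hform, Fin.forall_fin_two]
    refine ⟨(abs_le_of_sq_le ?_ : |u - c| ≤ _), (hcle.trans ?_ : |c| ≤ _)⟩ <;>
      nlinarith [sq_nonneg (u - c)]

instance fact_prime_five : Fact (Nat.Prime 5) := ⟨Nat.prime_five⟩

theorem two_ne_zero_zmod_five_powerSeries : (2 : (ZMod 5)⟦X⟧) ≠ 0 := by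
  rw [← map_ofNat C 2]
  exact (map_ne_zero_iff C C_injective).mpr (by decide)

namespace Quaternary

/-- Vectors `(v, w, u, c)` of a quaternary quadratic space: `v`, `w`, `u` are exponents of three eta
factors, `c` is the second variable of the cone. -/
abbrev Vec (R : Type*) := R × R × R × R

section Reflections

variable {R : Type*} [CommRing R]

/-- The quaternary quadratic form `v² + w² + u² - c²`. -/
def form : Vec R → R
  | (v, w, u, c) => v ^ 2 + w ^ 2 + u ^ 2 - c ^ 2

/-- The pairing of `(v, w, u, c)` with the norm-one vector `(0, 1, β, β)`. -/
def pivot (β : R) : Vec R → R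
  | (_, w, u, c) => w + β * (u - c)

/-- Reflection of `form` in the vector `(0, 1, β, β)`. -/
def reflA (β : R) : Vec R → Vec R
  | (v, w, u, c) =>
    let d := -2 * pivot β (v, w, u, c)
    (v, w + d, u + β * d, c + β * d)

/-- Reflection of `form` in the vector `(1, -1, -β, -β)`. -/
def reflB (β : R) : Vec R → Vec R
  | (v, w, u, c) =>
    let d := v - pivot β (v, w, u, c)
    (v - d, w + d, u + β * d, c + β * d)

/-- Reflection of `form` in the vector `(1, 1, β, β)`. -/
def reflC (β : R) : Vec R → Vec R
  | (v, w, u, c) =>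
    let d := -(v + pivot β (v, w, u, c))
    (v + d, w + d, u + β * d, c + β * d)

theorem reflA_involutive (β : R) : Function.Involutive (reflA β) := by
  rintro ⟨v, w, u, c⟩
  simp only [reflA, pivot, Prod.mk.injEq]
  refine ⟨trivial, ?_, ?_, ?_⟩ <;> ring

theorem reflB_involutive (β : R) : Function.Involutive (reflB β) := by
  rintro ⟨v, w, u, c⟩
  simp only [reflB, pivot, Prod.mk.injEq]
  refine ⟨?_, ?_, ?_, ?_⟩ <;> ring

theorem reflC_involutive (β : R) : Function.Involutive (reflC β) := by
  rintro ⟨v, w, u, c⟩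
  simp only [reflC, pivot, Prod.mk.injEq]
  refine ⟨?_, ?_, ?_, ?_⟩ <;> ring

theorem form_reflA (β : R) (x : Vec R) : form (reflA β x) = form x := by
  simp only [form, reflA, pivot]
  ring

theorem form_reflB (β : R) (x : Vec R) : form (reflB β x) = form x := by
  simp only [form, reflB, pivot]
  ring

theorem form_reflC (β : R) (x : Vec R) : form (reflC β x) = form x := by
  simp only [form, reflC, pivot]
  ring

/-- Reduction modulo `n`. -/
def reduce (n : ℕ) : Vec ℤ → Vec (ZMod n)
  | (v, w, u, c) => (v, w, u, c)

theorem reduce_reflA (n : ℕ) (β : ℤ) (x : Vec ℤ) :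
    reduce n (reflA β x) = reflA (β : ZMod n) (reduce n x) := by
  simp only [reduce, reflA, pivot]
  push_cast
  rfl

theorem reduce_reflB (n : ℕ) (β : ℤ) (x : Vec ℤ) :
    reduce n (reflB β x) = reflB (β : ZMod n) (reduce n x) := by
  simp only [reduce, reflB, pivot]
  push_cast
  rfl

theorem reduce_reflC (n : ℕ) (β : ℤ) (x : Vec ℤ) :
    reduce n (reflC β x) = reflC (β : ZMod n) (reduce n x) := by
  simp only [reduce, reflC, pivot]
  push_cast
  rfl

end Reflections

/-- The 3-part of the quaternary character `char`. -/
def charThree : Vec (ZMod 3) → ℤ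
  | (v, w, u, c) =>
    quadraticChar (ZMod 3) v * quadraticChar (ZMod 3) w * quadraticChar (ZMod 3) u *
      if c = 0 then 1 else 0

/-- The 4-part of the quaternary character `char`. -/
def charFour : Vec (ZMod 4) → ℤ
  | (v, w, u, c) => ZMod.χ₄ v * ZMod.χ₄ w * ZMod.χ₄ u * ZMod.χ₄ c

/-- The character by which sums over the quaternary lattice are twisted: the product of
`χ₁₂ v * χ₁₂ w * χ₁₂ u * χ₄ c` and of the indicator of `3 ∣ c`, reduced mod 5. -/
def char (x : Vec ℤ) : ZMod 5 :=
  (charThree (reduce 3 x) * charFour (reduce 4 x) : ℤ)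

theorem charFour_reflA : ∀ (β : ZMod 4) (x), charFour (reflA β x) = -charFour x := by
  decide +kernel

theorem charFour_reflB : ∀ (β : ZMod 4) (x), charFour (reflB β x) = charFour x := by
  decide +kernel

theorem charFour_reflC : ∀ (β : ZMod 4) (x), charFour (reflC β x) = charFour x := by
  decide +kernel

theorem sum_fixed_eq_one : ∀ (β : ZMod 3) (x), charThree x ≠ 0 →
    ((if reflA β x = x then 1 else 0) + (if reflB β x = x then 1 else 0) +
      if reflC β x = x then 1 else 0 : ZMod 5) = 1 := by
  decide +kernel

/-- The indicator of the lattice vectors fixed by `σ` mod 3. -/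
def fixedModThree (σ : Vec ℤ → Vec ℤ) (x : Vec ℤ) : ZMod 5 :=
  if reduce 3 (σ x) = reduce 3 x then 1 else 0

theorem char_eq_sum_fixedModThree (β : ℤ) :
    char = fixedModThree (reflA β) * char + fixedModThree (reflB β) * char +
      fixedModThree (reflC β) * char := by
  funext x
  simp only [Pi.add_apply, Pi.mul_apply, fixedModThree, reduce_reflA, reduce_reflB, reduce_reflC,
    ← add_mul]
  rcases eq_or_ne (charThree (reduce 3 x)) 0 with h | h
  · simp only [char, h, zero_mul, Int.cast_zero, mul_zero]
  · rw [sum_fixed_eq_one (β : ZMod 3) _ h, one_mul]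

theorem thetaSeries_fixedModThree_mul_eq_zero {σ : Vec ℤ → Vec ℤ} (hσ : Function.Involutive σ)
    (hform : ∀ x, form (σ x) = form x) {w : Vec ℤ → ZMod 5}
    (hw : ∀ x, reduce 3 (σ x) = reduce 3 x → w (σ x) = -w x) :
    thetaSeries form (fixedModThree σ * w) = 0 := by
  refine thetaSeries_eq_zero_of_comp_eq_neg (by decide) hσ hform (funext fun x => ?_)
  simp only [Function.comp_apply, Pi.neg_apply, Pi.mul_apply, fixedModThree, hσ x,
    eq_comm (a := reduce 3 x)]
  split_ifs with h
  · rw [hw x h, mul_neg]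
  · rw [zero_mul, zero_mul, neg_zero]

theorem thetaSeries_eq_zero_of_reflections {β : ℤ} {φ : Vec (ZMod 5) → ZMod 5}
    {k : Vec ℤ → ZMod 5} (hA : ∀ x, φ (reflA (β : ZMod 5) x) = φ x)
    (hB : ∀ x, φ (reflB (β : ZMod 5) x) = -φ x) (hC : ∀ x, φ (reflC (β : ZMod 5) x) = -φ x)
    (hk : ∀ v v' w u c d, k (v', w + d, u + β * d, c + β * d) = k (v, w, u, c))
    (hadm : IsAdmissible form (φ ∘ reduce 5 * (char * k))) :
    thetaSeries form (φ ∘ reduce 5 * (char * k)) = 0 := by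
  set W := φ ∘ reduce 5 * (char * k)
  have W_reflA (x) (h : reduce 3 (reflA β x) = reduce 3 x) : W (reflA β x) = -W x := by
    have kA : k (reflA β x) = k x := hk ..
    simp only [W, Pi.mul_apply, Function.comp_apply, char, h, reduce_reflA 4, reduce_reflA 5,
      charFour_reflA, hA, kA]
    push_cast
    ring
  have W_reflB (x) (h : reduce 3 (reflB β x) = reduce 3 x) : W (reflB β x) = -W x := by
    have kB : k (reflB β x) = k x := hk ..
    simp only [W, Pi.mul_apply, Function.comp_apply, char, h, reduce_reflB 4, reduce_reflB 5,
      charFour_reflB, hB, kB, neg_mul]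
  have W_reflC (x) (h : reduce 3 (reflC β x) = reduce 3 x) : W (reflC β x) = -W x := by
    have kC : k (reflC β x) = k x := hk ..
    simp only [W, Pi.mul_apply, Function.comp_apply, char, h, reduce_reflC 4, reduce_reflC 5,
      charFour_reflC, hC, kC, neg_mul]
  have W_eq : W = fixedModThree (reflA β) * W + fixedModThree (reflB β) * W +
      fixedModThree (reflC β) * W := by
    simp only [W]
    nth_rw 1 [char_eq_sum_fixedModThree β]
    ring
  rw [W_eq, thetaSeries_add ((hadm.mul_left _).add (hadm.mul_left _)) (hadm.mul_left _),
    thetaSeries_add (hadm.mul_left _) (hadm.mul_left _)]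
  rw [thetaSeries_fixedModThree_mul_eq_zero (reflA_involutive β) (form_reflA β) W_reflA,
    thetaSeries_fixedModThree_mul_eq_zero (reflB_involutive β) (form_reflB β) W_reflB,
    thetaSeries_fixedModThree_mul_eq_zero (reflC_involutive β) (form_reflC β) W_reflC,
    add_zero, add_zero]

section Symmetries

variable {R : Type*}

/-- The isometry of `form` exchanging `v` and `w`. -/
def swapVW : Vec R → Vec R
  | (v, w, u, c) => (w, v, u, c)

/-- The isometry of `form` exchanging `w` and `u`. -/
def swapWU : Vec R → Vec R
  | (v, w, u, c) => (v, u, w, c)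

theorem swapWU_involutive : Function.Involutive (swapWU (R := R)) :=
  fun _ => rfl

variable [CommRing R]

/-- The isometry of `form` changing the sign of `v`. -/
def negV : Vec R → Vec R
  | (v, w, u, c) => (-v, w, u, c)

/-- The isometry of `form` changing the sign of `w`. -/
def negW : Vec R → Vec R
  | (v, w, u, c) => (v, -w, u, c)

theorem form_swapWU (x : Vec R) : form (swapWU x) = form x := by
  obtain ⟨v, w, u, c⟩ := x
  simp only [form, swapWU]
  ring

end Symmetries

theorem char_apply (v w u c : ℤ) : char (v, w, u, c) =
    χ₁₂ v * (χ₁₂ w * (χ₁₂ u * χ₄ c * if 3 ∣ c then 1 else 0 : ℤ)) := by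
  simp only [char, reduce, charThree, charFour, χ₁₂, χ₃, χ₄, ZMod.intCast_zmod_eq_zero_iff_dvd]
  push_cast
  ring

/-- The sign kernel of the cone `0 < c(u - c)`. -/
def coneU : Vec ℤ → ZMod 5
  | (_, _, u, c) => (c.sign - (c - u).sign : ℤ)

theorem char_mul_coneU_apply (x : Vec ℤ) :
    (char * coneU) x = χ₁₂ x.1 * (χ₁₂ x.2.1 * coneWeight x.2.2) := by
  obtain ⟨v, w, u, c⟩ := x
  simp only [Pi.mul_apply, char_apply, coneU, coneWeight]
  push_cast
  ring

theorem isAdmissible_char_mul_coneU : IsAdmissible form (char * coneU) := by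
  have hχ := isAdmissible_χ₁₂.map (Int.castRingHom (ZMod 5))
  have hK := isAdmissible_coneWeight.map (Int.castRingHom (ZMod 5))
  have hform : form = fun x : Vec ℤ => x.1 ^ 2 + (x.2.1 ^ 2 + (x.2.2.1 ^ 2 - x.2.2.2 ^ 2)) := by
    funext ⟨v, w, u, c⟩
    simp only [form]
    ring
  rw [hform, funext char_mul_coneU_apply]
  exact hχ.mul (hχ.mul hK)

/-- The series `∑ φ(x mod 5) * char x * coneU x * q ^ form x`, linear in the weight `φ`. -/
def coneSum : (Vec (ZMod 5) → ZMod 5) →ₗ[ZMod 5] (ZMod 5)⟦X⟧ :=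
  isAdmissible_char_mul_coneU.thetaMap ∘ₗ LinearMap.funLeft (ZMod 5) (ZMod 5) (reduce 5)

theorem coneSum_apply (φ : Vec (ZMod 5) → ZMod 5) :
    coneSum φ = thetaSeries form (φ ∘ reduce 5 * (char * coneU)) :=
  rfl

theorem coneSum_comp {σ : Vec ℤ → Vec ℤ} {σ₅ : Vec (ZMod 5) → Vec (ZMod 5)}
    (hσ : Function.Involutive σ) (hform : ∀ x, form (σ x) = form x) (hchar : char ∘ σ = char)
    (hreduce : reduce 5 ∘ σ = σ₅ ∘ reduce 5) (φ : Vec (ZMod 5) → ZMod 5) :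
    coneSum (φ ∘ σ₅) = thetaSeries form (φ ∘ reduce 5 * (char * coneU ∘ σ)) := by
  rw [← thetaSeries_comp_involutive hσ hform, coneSum_apply, Function.comp_assoc, ← hreduce]
  congr 1
  change _ = φ ∘ reduce 5 ∘ σ * (char ∘ σ * coneU ∘ σ ∘ σ)
  rw [hchar, hσ.comp_self, Function.comp_id]

theorem coneSum_comp_negV (φ : Vec (ZMod 5) → ZMod 5) : coneSum (φ ∘ negV) = coneSum φ := by
  refine coneSum_comp (σ := negV) ?_ ?_ (funext ?_) (funext ?_) φ <;> rintro ⟨v, w, u, c⟩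
  · simp only [negV, neg_neg]
  · simp only [form, negV, neg_sq]
  · simp only [Function.comp_apply, negV, char_apply, χ₁₂_neg]
  · simp only [Function.comp_apply, negV, reduce, Int.cast_neg]

theorem coneSum_comp_negW (φ : Vec (ZMod 5) → ZMod 5) : coneSum (φ ∘ negW) = coneSum φ := by
  refine coneSum_comp (σ := negW) ?_ ?_ (funext ?_) (funext ?_) φ <;> rintro ⟨v, w, u, c⟩
  · simp only [negW, neg_neg]
  · simp only [form, negW, neg_sq]
  · simp only [Function.comp_apply, negW, char_apply, χ₁₂_neg]
  · simp only [Function.comp_apply, negW, reduce, Int.cast_neg]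

theorem coneSum_comp_swapVW (φ : Vec (ZMod 5) → ZMod 5) :
    coneSum (φ ∘ swapVW) = coneSum φ := by
  refine coneSum_comp (σ := swapVW) ?_ ?_ (funext ?_) (funext ?_) φ <;> rintro ⟨v, w, u, c⟩
  · rfl
  · simp only [form, swapVW, add_comm]
  · simp only [Function.comp_apply, swapVW, char_apply, mul_left_comm (χ₁₂ w : ZMod 5)]
  · rfl

theorem char_comp_swapWU : char ∘ swapWU = char := by
  funext ⟨v, w, u, c⟩
  simp only [Function.comp_apply, swapWU, char_apply]
  push_cast
  ring

theorem coneSum_comp_swapWU (φ : Vec (ZMod 5) → ZMod 5) :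
    coneSum (φ ∘ swapWU) = thetaSeries form (φ ∘ reduce 5 * (char * coneU ∘ swapWU)) :=
  coneSum_comp swapWU_involutive form_swapWU char_comp_swapWU rfl φ

theorem isAdmissible_char_mul_coneU_comp_swapWU :
    IsAdmissible form (char * coneU ∘ swapWU) := by
  rw [← char_comp_swapWU, ← funext form_swapWU]
  exact isAdmissible_char_mul_coneU.comp_injective swapWU_involutive.injective

theorem coneSum_eq_zero_of_comp_swapVW_eq_neg {φ : Vec (ZMod 5) → ZMod 5}
    (hφ : φ ∘ swapVW = -φ) : coneSum φ = 0 := by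
  have h := coneSum_comp_swapVW φ
  rw [hφ, map_neg] at h
  have two_mul : (2 : (ZMod 5)⟦X⟧) * coneSum φ = 0 := by linear_combination -h
  exact (mul_eq_zero.mp two_mul).resolve_left two_ne_zero_zmod_five_powerSeries

section Shear

variable {R : Type*} [CommRing R]

/-- Parametrisation of the vectors `(v, w, u, c)` with `u ≡ 2w` mod 5. -/
def shear : Vec R → Vec R
  | (v, w, t, c) => (v, w, 2 * w + 5 * t, c)

/-- The reflection of `form ∘ shear` in the vector `(0, -2, 1, 0)`. -/
def shearRefl : Vec R → Vec R
  | (v, w, t, c) => (v, w + 4 * t, -t, c)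

theorem form_shear_shearRefl (x : Vec R) : form (shear (shearRefl x)) = form (shear x) := by
  simp only [form, shear, shearRefl]
  ring

theorem shearRefl_involutive : Function.Involutive (shearRefl (R := R)) := by
  rintro ⟨v, w, t, c⟩
  simp only [shearRefl, Prod.mk.injEq]
  refine ⟨trivial, ?_, ?_, trivial⟩ <;> ring

theorem reduce_shear (n : ℕ) (x : Vec ℤ) : reduce n (shear x) = shear (reduce n x) := by
  simp only [reduce, shear]
  push_cast
  rfl

theorem reduce_shearRefl (n : ℕ) (x : Vec ℤ) :
    reduce n (shearRefl x) = shearRefl (reduce n x) := by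
  simp only [reduce, shearRefl]
  push_cast
  rfl

end Shear

theorem charThree_shear_shearRefl : ∀ x, charThree (shear (shearRefl x)) = charThree (shear x) := by
  decide +kernel

theorem charFour_shear_shearRefl : ∀ x, charFour (shear (shearRefl x)) = -charFour (shear x) := by
  decide +kernel

theorem char_shear_shearRefl (x : Vec ℤ) : char (shear (shearRefl x)) = -char (shear x) := by
  simp only [char, reduce_shear, reduce_shearRefl, charThree_shear_shearRefl,
    charFour_shear_shearRefl, mul_neg, Int.cast_neg]

theorem shear_injective : Function.Injective (shear (R := ℤ)) := by
  rintro ⟨v, w, t, c⟩ ⟨v', w', t', c'⟩ h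
  simp only [shear, Prod.mk.injEq] at h ⊢
  omega

/-- A weight on the sublattice `u ≡ 2w mod 5`, which `shear` parametrizes; it is an eigenvector of
the reflections with `β = 2`. -/
def diagWeight : Vec (ZMod 5) → ZMod 5
  | (v, w, u, c) => (if v ^ 2 = 1 ∧ c ^ 2 = 1 ∧ u = 2 * w then 1 else 0) -
      if v ^ 2 = 4 ∧ c ^ 2 = 4 ∧ u = 2 * w then 1 else 0

theorem support_diagWeight_subset :
    Function.support (diagWeight ∘ reduce 5) ⊆ Set.range shear := by
  rintro ⟨v, w, u, c⟩ h
  have huw : (u : ZMod 5) = 2 * w := by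
    by_contra hne
    simp only [Function.mem_support, Function.comp_apply, reduce, diagWeight, hne, and_false,
      if_false, sub_zero, ne_eq, not_true_eq_false] at h
  have hdvd : (5 : ℤ) ∣ u - 2 * w := by
    refine (ZMod.intCast_zmod_eq_zero_iff_dvd _ 5).mp ?_
    push_cast
    rw [huw, sub_self]
  obtain ⟨t, ht⟩ := hdvd
  exact ⟨(v, w, t, c), by simp only [shear, ← ht]; ring_nf⟩

theorem diagWeight_shear_shearRefl :
    ∀ x, diagWeight (shear (shearRefl x)) = diagWeight (shear x) := by
  decide +kernel

/-- The image of `coneU` under the reflection that `shearRefl` induces on `(v, w, u, c)`. -/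
def coneL : Vec ℤ → ZMod 5
  | (_, w, u, c) => (c.sign - (5 * c - 4 * w - 3 * u).sign : ℤ)

theorem coneU_shear_shearRefl (x : Vec ℤ) : coneU (shear (shearRefl x)) = coneL (shear x) := by
  obtain ⟨v, w, t, c⟩ := x
  have h : (5 * (c - 2 * w - 3 * t)).sign = (c - 2 * w - 3 * t).sign := by
    rw [Int.sign_mul, show (5 : ℤ).sign = 1 from rfl, one_mul]
  simp only [coneU, coneL, shear, shearRefl]
  rw [show 5 * c - 4 * w - 3 * (2 * w + 5 * t) = 5 * (c - 2 * w - 3 * t) by ring, h]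
  ring_nf

theorem coneU_weight_shear_shearRefl :
    (diagWeight ∘ reduce 5 * (char * coneU)) ∘ shear ∘ shearRefl =
      -((diagWeight ∘ reduce 5 * (char * coneL)) ∘ shear) := by
  funext x
  simp only [Function.comp_apply, Pi.mul_apply, Pi.neg_apply, reduce_shear, reduce_shearRefl,
    diagWeight_shear_shearRefl, char_shear_shearRefl, coneU_shear_shearRefl, neg_mul, mul_neg]

theorem support_diagWeight_mul_subset (k : Vec ℤ → ZMod 5) :
    Function.support (diagWeight ∘ reduce 5 * k) ⊆ Set.range shear :=
  (Function.support_mul_subset_left _ _).trans support_diagWeight_subset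

theorem isAdmissible_diagWeight_coneL :
    IsAdmissible form (diagWeight ∘ reduce 5 * (char * coneL)) := by
  refine .of_comp_injective (f := shear) ?_ (support_diagWeight_mul_subset _)
  have h := (isAdmissible_char_mul_coneU.mul_left (diagWeight ∘ reduce 5)).comp_injective
    (shear_injective.comp shearRefl_involutive.injective)
  rw [coneU_weight_shear_shearRefl] at h
  rw [← show form ∘ shear ∘ shearRefl = form ∘ shear from funext form_shear_shearRefl]
  exact h.mono fun i hi => neg_ne_zero.mpr hi

theorem coneSum_diagWeight :
    coneSum diagWeight = -thetaSeries form (diagWeight ∘ reduce 5 * (char * coneL)) := by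
  rw [coneSum_apply,
    ← thetaSeries_comp_injective shear_injective (support_diagWeight_mul_subset _),
    ← thetaSeries_comp_injective shear_injective (support_diagWeight_mul_subset _),
    ← thetaSeries_neg, ← coneU_weight_shear_shearRefl]
  exact (thetaSeries_comp_involutive shearRefl_involutive form_shear_shearRefl _).symm

theorem diagWeight_reflA : ∀ x, diagWeight (reflA 2 x) = diagWeight x := by
  decide +kernel

theorem diagWeight_reflB : ∀ x, diagWeight (reflB 2 x) = -diagWeight x := by
  decide +kernel

theorem diagWeight_reflC : ∀ x, diagWeight (reflC 2 x) = -diagWeight x := by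
  decide +kernel

theorem coneSum_diagWeight_eq_zero : coneSum diagWeight = 0 := by
  have hU := isAdmissible_char_mul_coneU.mul_left (diagWeight ∘ reduce 5)
  have hL := isAdmissible_diagWeight_coneL
  have hsub : diagWeight ∘ reduce 5 * (char * (coneU - coneL)) =
      diagWeight ∘ reduce 5 * (char * coneU) + -(diagWeight ∘ reduce 5 * (char * coneL)) := by
    ring
  have hnegL : IsAdmissible form (-(diagWeight ∘ reduce 5 * (char * coneL))) :=
    hL.mono fun i hi => neg_ne_zero.mp hi
  have hzero : thetaSeries form (diagWeight ∘ reduce 5 * (char * (coneU - coneL))) = 0 := by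
    refine thetaSeries_eq_zero_of_reflections (β := 2) diagWeight_reflA diagWeight_reflB
      diagWeight_reflC (fun v v' w u c d => ?_) (hsub ▸ hU.add hnegL)
    simp only [Pi.sub_apply, coneU, coneL]
    push_cast
    ring_nf
  rw [hsub, thetaSeries_add hU hnegL, thetaSeries_neg, ← coneSum_diagWeight] at hzero
  have two_mul : 2 * coneSum diagWeight = 0 := by
    linear_combination hzero + coneSum_apply diagWeight
  exact (mul_eq_zero.mp two_mul).resolve_left two_ne_zero_zmod_five_powerSeries

/-- The kernel by which `coneSum` changes under `swapWU`. -/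
def coneDiff : Vec ℤ → ZMod 5
  | (_, w, u, c) => ((c - u).sign - (c - w).sign : ℤ)

theorem coneSum_comp_swapWU_sub (φ : Vec (ZMod 5) → ZMod 5) :
    IsAdmissible form (φ ∘ reduce 5 * (char * coneDiff)) ∧
      thetaSeries form (φ ∘ reduce 5 * (char * coneDiff)) =
        coneSum (φ ∘ swapWU) - coneSum φ := by
  have kernel_eq : φ ∘ reduce 5 * (char * coneDiff) =
      φ ∘ reduce 5 * (char * coneU ∘ swapWU) + -1 * (φ ∘ reduce 5 * (char * coneU)) := by
    funext ⟨v, w, u, c⟩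
    simp only [Pi.add_apply, Pi.mul_apply, Pi.neg_apply, Pi.one_apply, Function.comp_apply,
      coneDiff, coneU, swapWU]
    push_cast
    ring
  have hU := isAdmissible_char_mul_coneU.mul_left (φ ∘ reduce 5)
  have hW := isAdmissible_char_mul_coneU_comp_swapWU.mul_left (φ ∘ reduce 5)
  refine ⟨kernel_eq ▸ hW.add (hU.mul_left _), ?_⟩
  rw [kernel_eq, thetaSeries_add hW (hU.mul_left _), ← coneSum_comp_swapWU, neg_one_mul,
    thetaSeries_neg, ← coneSum_apply, sub_eq_add_neg]

/-- The indicator of the vectors whose coordinates have squares `i`, `j`, `k`, `l`. -/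
def sqIndicator (i j k l : ZMod 5) : Vec (ZMod 5) → ZMod 5
  | (v, w, u, c) => if v ^ 2 = i ∧ w ^ 2 = j ∧ u ^ 2 = k ∧ c ^ 2 = l then 1 else 0

/-- A weight on vectors with all coordinates nonzero mod 5; with `planeWeight` it decomposes
`diagWeight` up to symmetry. -/
def unitWeight : Vec (ZMod 5) → ZMod 5 := sqIndicator 1 1 4 1 - sqIndicator 4 4 1 4

/-- A weight on the plane `w = u = 0` mod 5. -/
def planeWeight : Vec (ZMod 5) → ZMod 5 := sqIndicator 1 0 0 1 - sqIndicator 4 0 0 4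

/-- A weight whose `coneSum` is invariant under `swapWU`. -/
def mixedWeight : Vec (ZMod 5) → ZMod 5 := unitWeight + (2 : ZMod 5) • sqIndicator 0 1 4 0

/-- The sum of the cyclic shifts of a square class indicator with `c = 0`. -/
def cyclicWeight : Vec (ZMod 5) → ZMod 5 :=
  sqIndicator 0 1 4 0 + sqIndicator 1 4 0 0 + sqIndicator 4 0 1 0

/-- The antisymmetrization of `cyclicWeight`. -/
def alternatingWeight : Vec (ZMod 5) → ZMod 5 := cyclicWeight - cyclicWeight ∘ swapWU

/-- The antisymmetric function `-c ^ 3 * (v - w) * (w - u) * (u - v)` on isotropic vectors. -/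
def vandermondeWeight : Vec (ZMod 5) → ZMod 5
  | (v, w, u, c) =>
    if form (v, w, u, c) = 0 then -c ^ 3 * (v - w) * (w - u) * (u - v) else 0

/-- A correction of `mixedWeight - mixedWeight ∘ swapWU`, by weights with vanishing `coneSum`, to
an eigenvector of the reflections with `β = 1`. -/
def reflWeight : Vec (ZMod 5) → ZMod 5 :=
  mixedWeight - mixedWeight ∘ swapWU - (2 : ZMod 5) • alternatingWeight -
    (vandermondeWeight + vandermondeWeight ∘ negV)

theorem reflWeight_reflA : ∀ x, reflWeight (reflA 1 x) = reflWeight x := by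
  decide +kernel

theorem reflWeight_reflB : ∀ x, reflWeight (reflB 1 x) = -reflWeight x := by
  decide +kernel

theorem reflWeight_reflC : ∀ x, reflWeight (reflC 1 x) = -reflWeight x := by
  decide +kernel

theorem reflWeight_comp_swapWU : reflWeight ∘ swapWU = -reflWeight :=
  funext (by decide +kernel)

theorem alternatingWeight_comp_swapVW : alternatingWeight ∘ swapVW = -alternatingWeight :=
  funext (by decide +kernel)

theorem vandermondeWeight_comp_swapVW : vandermondeWeight ∘ swapVW = -vandermondeWeight :=
  funext (by decide +kernel)

theorem diagWeight_add_negW : ∀ x, diagWeight x + diagWeight (negW x) =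
    2 * planeWeight x + unitWeight x + unitWeight (swapWU x) := by
  decide +kernel

theorem coneSum_reflWeight_eq_zero : coneSum reflWeight = 0 := by
  obtain ⟨hadm, hsub⟩ := coneSum_comp_swapWU_sub reflWeight
  rw [thetaSeries_eq_zero_of_reflections (β := 1) (by simpa using reflWeight_reflA)
    (by simpa using reflWeight_reflB) (by simpa using reflWeight_reflC)
    (fun v v' w u c d => by simp only [coneDiff]; ring_nf) hadm,
    reflWeight_comp_swapWU, map_neg] at hsub
  have two_mul : 2 * coneSum reflWeight = 0 := by linear_combination hsub
  exact (mul_eq_zero.mp two_mul).resolve_left two_ne_zero_zmod_five_powerSeries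

theorem coneSum_mixedWeight_comp_swapWU :
    coneSum (mixedWeight ∘ swapWU) = coneSum mixedWeight := by
  have h := coneSum_reflWeight_eq_zero
  rw [reflWeight, map_sub, map_sub, map_sub, map_smul, map_add, coneSum_comp_negV,
    coneSum_eq_zero_of_comp_swapVW_eq_neg alternatingWeight_comp_swapVW,
    coneSum_eq_zero_of_comp_swapVW_eq_neg vandermondeWeight_comp_swapVW,
    smul_zero, add_zero, sub_zero, sub_zero] at h
  exact (sub_eq_zero.mp h).symm

/-- The weight whose vanishing `coneSum` is the relation between the residue parts of the cone
series. -/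
def relationWeight : Vec (ZMod 5) → ZMod 5 :=
  unitWeight + planeWeight + sqIndicator 0 1 4 0 - sqIndicator 0 1 4 0 ∘ swapWU

theorem two_smul_relationWeight : (2 : ZMod 5) • relationWeight =
    diagWeight + diagWeight ∘ negW + (mixedWeight - mixedWeight ∘ swapWU) := by
  funext x
  have := diagWeight_add_negW x
  simp only [relationWeight, mixedWeight, Pi.smul_apply, Pi.add_apply, Pi.sub_apply,
    Function.comp_apply, smul_eq_mul]
  linear_combination -this

theorem coneSum_relationWeight_eq_zero : coneSum relationWeight = 0 := by
  have h := congrArg coneSum two_smul_relationWeight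
  rw [map_smul, map_add, map_add, map_sub, coneSum_comp_negW, coneSum_diagWeight_eq_zero,
    coneSum_mixedWeight_comp_swapWU, sub_self, add_zero, add_zero, smul_eq_zero] at h
  exact h.resolve_left (by decide)

end Quaternary

section ResiduePart

variable {R : Type*} [CommRing R] {m : ℕ}

/-- The part of a power series supported on the exponents in the class `r` modulo `m`. -/
def residuePart (r : ZMod m) : R⟦X⟧ →ₗ[R] R⟦X⟧ where
  toFun f := .mk fun n => if (n : ZMod m) = r then coeff n f else 0
  map_add' f g := by
    ext n
    simp only [coeff_mk, map_add, ite_add_ite, add_zero]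
  map_smul' c f := by
    ext n
    simp only [coeff_mk, map_smul, smul_ite, smul_zero, RingHom.id_apply]

theorem coeff_residuePart (r : ZMod m) (f : R⟦X⟧) (n : ℕ) :
    coeff n (residuePart r f) = if (n : ZMod m) = r then coeff n f else 0 :=
  coeff_mk n fun n => if (n : ZMod m) = r then coeff n f else 0

theorem residuePart_thetaSeries {ι : Type*} (r : ZMod m) (E : ι → ℤ) (w : ι → R) :
    residuePart r (thetaSeries E w) =
      thetaSeries E ((fun i => if (E i : ZMod m) = r then 1 else 0) * w) := by
  ext n
  have hE {i : ι} (hi : E i = n) : (E i : ZMod m) = n := by rw [hi, Int.cast_natCast]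
  rw [coeff_residuePart, coeff_thetaSeries, coeff_thetaSeries]
  simp only [Pi.mul_apply, ite_mul, one_mul, zero_mul]
  split_ifs with hn
  · exact finsum_congr fun i =>
      if_ctx_congr .rfl (fun hi => (if_pos (hE hi ▸ hn)).symm) fun _ => rfl
  · refine (finsum_eq_zero_of_forall_eq_zero fun i => ?_).symm
    exact ite_eq_right_iff.mpr fun hi => if_neg (hE hi ▸ hn)

theorem residuePart_mul_residuePart (r s : ZMod m) (f g : R⟦X⟧) :
    residuePart r (residuePart s f * g) = residuePart s f * residuePart (r - s) g := by
  ext n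
  rw [coeff_residuePart, coeff_mul, coeff_mul, ← mul_boole, Finset.sum_mul]
  refine Finset.sum_congr rfl fun p hp => ?_
  have hp : (n : ZMod m) = p.1 + p.2 := by
    exact_mod_cast congrArg Nat.cast (Finset.HasAntidiagonal.mem_antidiagonal.mp hp).symm
  rw [coeff_residuePart, coeff_residuePart, hp]
  by_cases h : (p.1 : ZMod m) = s
  · simp only [h, if_true, eq_sub_iff_add_eq', mul_ite, mul_one, mul_zero]
  · simp only [h, if_false, zero_mul]

theorem residuePart_X_pow_mul (r : ZMod m) (k : ℕ) (f : R⟦X⟧) :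
    residuePart r (X ^ k * f) = X ^ k * residuePart (r - (k : ZMod m)) f := by
  have hX : residuePart (k : ZMod m) (X ^ k : R⟦X⟧) = X ^ k := by
    ext n
    rw [coeff_residuePart, coeff_X_pow]
    split_ifs <;> simp_all only [not_true_eq_false]
  rw [← hX, residuePart_mul_residuePart]

end ResiduePart

section Theta

/-- The series `∑ φ(u mod 5) * χ₁₂ u * q ^ u²`, linear in the weight `φ`. -/
def etaTheta : (ZMod 5 → ZMod 5) →ₗ[ZMod 5] (ZMod 5)⟦X⟧ :=
  (isAdmissible_χ₁₂.map (Int.castRingHom (ZMod 5))).thetaMap ∘ₗ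
    LinearMap.funLeft (ZMod 5) (ZMod 5) (fun u : ℤ => (u : ZMod 5))

/-- The series `∑ φ((u, c) mod 5) * coneWeight (u, c) * q ^ (u² - c²)`, linear in the weight `φ`. -/
def coneTheta : (ZMod 5 × ZMod 5 → ZMod 5) →ₗ[ZMod 5] (ZMod 5)⟦X⟧ :=
  (isAdmissible_coneWeight.map (Int.castRingHom (ZMod 5))).thetaMap ∘ₗ
    LinearMap.funLeft (ZMod 5) (ZMod 5) (fun p : ℤ × ℤ => ((p.1 : ZMod 5), (p.2 : ZMod 5)))

theorem etaTheta_apply (φ : ZMod 5 → ZMod 5) :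
    etaTheta φ = thetaSeries (fun u : ℤ => u ^ 2) (fun u => φ u * χ₁₂ u) :=
  rfl

theorem coneTheta_apply (φ : ZMod 5 × ZMod 5 → ZMod 5) :
    coneTheta φ =
      thetaSeries (fun p : ℤ × ℤ => p.1 ^ 2 - p.2 ^ 2) (fun p => φ (p.1, p.2) * coneWeight p) :=
  rfl

theorem isAdmissible_etaTheta (φ : ZMod 5 → ZMod 5) :
    IsAdmissible (fun u : ℤ => u ^ 2) (fun u => φ u * χ₁₂ u : ℤ → ZMod 5) :=
  (isAdmissible_χ₁₂.map (Int.castRingHom (ZMod 5))).mul_left _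

theorem isAdmissible_coneTheta (φ : ZMod 5 × ZMod 5 → ZMod 5) :
    IsAdmissible (fun p : ℤ × ℤ => p.1 ^ 2 - p.2 ^ 2)
      (fun p => φ (p.1, p.2) * coneWeight p : ℤ × ℤ → ZMod 5) :=
  (isAdmissible_coneWeight.map (Int.castRingHom (ZMod 5))).mul_left _

theorem etaTheta_mul_etaTheta_mul_coneTheta (φ ψ : ZMod 5 → ZMod 5)
    (ω : ZMod 5 × ZMod 5 → ZMod 5) :
    etaTheta φ * (etaTheta ψ * coneTheta ω) =
      Quaternary.coneSum fun x => φ x.1 * ψ x.2.1 * ω x.2.2 := by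
  have hφ := isAdmissible_etaTheta φ
  have hψω := (isAdmissible_etaTheta ψ).mul (isAdmissible_coneTheta ω)
  rw [etaTheta_apply, etaTheta_apply, coneTheta_apply,
    thetaSeries_mul (isAdmissible_etaTheta ψ) (isAdmissible_coneTheta ω), thetaSeries_mul hφ hψω,
    Quaternary.coneSum_apply]
  congr 1
  · funext ⟨v, w, u, c⟩
    simp only [Quaternary.form]
    ring
  · funext x
    simp only [Pi.mul_apply (f := _ ∘ _), Quaternary.char_mul_coneU_apply, Function.comp_apply,
      Quaternary.reduce]
    ring

/-- The indicator of the residues with square `r`. -/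
def sqIndicator (r : ZMod 5) : ZMod 5 → ZMod 5 := fun u => if u ^ 2 = r then 1 else 0

/-- The part of `∑ χ₁₂(u) * q ^ u²` with exponents in the class `r` modulo 5. -/
def etaPart (r : ZMod 5) : (ZMod 5)⟦X⟧ := residuePart r (etaTheta 1)

/-- The part of the series of `coneWeight` with `u² ≡ k` and `c² ≡ l` modulo 5. -/
def conePart (k l : ZMod 5) : (ZMod 5)⟦X⟧ :=
  coneTheta fun p => sqIndicator k p.1 * sqIndicator l p.2

theorem etaPart_eq_etaTheta (r : ZMod 5) : etaPart r = etaTheta (sqIndicator r) := by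
  rw [etaPart, etaTheta_apply, residuePart_thetaSeries, etaTheta_apply]
  congr 1
  funext u
  simp only [Pi.mul_apply, Pi.one_apply, one_mul, sqIndicator, Int.cast_pow]

theorem residuePart_coneTheta (r : ZMod 5) :
    residuePart r (coneTheta 1) = coneTheta fun p => if p.1 ^ 2 - p.2 ^ 2 = r then 1 else 0 := by
  rw [coneTheta_apply, residuePart_thetaSeries, coneTheta_apply]
  congr 1
  funext p
  simp only [Pi.mul_apply, Pi.one_apply, one_mul, Int.cast_sub, Int.cast_pow]

theorem etaTheta_one : etaTheta 1 = etaPart 0 + etaPart 1 + etaPart 4 := by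
  simp only [etaPart_eq_etaTheta, ← map_add]
  exact congrArg etaTheta (funext (by decide))

theorem residuePart_one_coneTheta :
    residuePart (1 : ZMod 5) (coneTheta 1) = conePart 1 0 + conePart 0 4 := by
  rw [residuePart_coneTheta, conePart, conePart, ← map_add]
  exact congrArg coneTheta (funext (by decide))

theorem residuePart_two_coneTheta : residuePart (2 : ZMod 5) (coneTheta 1) = conePart 1 4 := by
  rw [residuePart_coneTheta]
  exact congrArg coneTheta (funext (by decide))

theorem residuePart_three_coneTheta : residuePart (3 : ZMod 5) (coneTheta 1) = conePart 4 1 := by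
  rw [residuePart_coneTheta]
  exact congrArg coneTheta (funext (by decide))

theorem residuePart_four_coneTheta :
    residuePart (4 : ZMod 5) (coneTheta 1) = conePart 4 0 + conePart 0 1 := by
  rw [residuePart_coneTheta, conePart, conePart, ← map_add]
  exact congrArg coneTheta (funext (by decide))

theorem residuePart_etaTheta_mul (r : ZMod 5) (F : (ZMod 5)⟦X⟧) :
    residuePart r (etaTheta 1 * F) = etaPart 1 * residuePart (r - 1) F +
      etaPart 0 * residuePart r F + etaPart 4 * residuePart (r - 4) F := by
  rw [etaTheta_one, add_mul, add_mul, map_add, map_add, etaPart, etaPart, etaPart,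
    residuePart_mul_residuePart, residuePart_mul_residuePart, residuePart_mul_residuePart, sub_zero]
  ring

theorem etaPart_mul_etaPart_mul_conePart (i j k l : ZMod 5) :
    etaPart i * (etaPart j * conePart k l) =
      Quaternary.coneSum (Quaternary.sqIndicator i j k l) := by
  rw [etaPart_eq_etaTheta, etaPart_eq_etaTheta, conePart, etaTheta_mul_etaTheta_mul_coneTheta]
  congr 1
  funext ⟨v, w, u, c⟩
  simp only [Quaternary.sqIndicator, sqIndicator, ite_and, mul_ite, mul_one, mul_zero]
  split_ifs <;> rfl

theorem sum_etaPart_mul_etaPart_mul_conePart_eq_zero :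
    etaPart 1 * (etaPart 1 * conePart 4 1) - etaPart 4 * (etaPart 4 * conePart 1 4) +
      etaPart 1 * (etaPart 0 * conePart 0 1) - etaPart 4 * (etaPart 0 * conePart 0 4) +
      etaPart 0 * (etaPart 1 * conePart 4 0) - etaPart 0 * (etaPart 4 * conePart 1 0) = 0 := by
  simp only [etaPart_mul_etaPart_mul_conePart, ← map_add, ← map_sub]
  rw [← Quaternary.coneSum_relationWeight_eq_zero]
  congr 1
  funext ⟨v, w, u, c⟩
  have swap : Quaternary.sqIndicator 0 1 4 0 (v, u, w, c) =
      Quaternary.sqIndicator 0 4 1 0 (v, w, u, c) :=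
    if_congr (by tauto) rfl rfl
  simp only [Quaternary.relationWeight, Quaternary.unitWeight, Quaternary.planeWeight,
    Pi.add_apply, Pi.sub_apply, Function.comp_apply, Quaternary.swapWU, swap]
  ring

end Theta

namespace Binary

section Shear

variable {R : Type*} [CommRing R]

/-- The binary quadratic form `w² + u²`. -/
def form : R × R → R
  | (w, u) => w ^ 2 + u ^ 2

/-- Parametrisation of the pairs `(w, u)` with `u ≡ 2w` mod 5. -/
def shear : R × R → R × R
  | (w, t) => (w, 2 * w + 5 * t)

/-- The reflection of `form ∘ shear` in the vector `(-2, 1)`. -/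
def shearRefl : R × R → R × R
  | (w, t) => (w + 4 * t, -t)

theorem shearRefl_involutive : Function.Involutive (shearRefl (R := R)) := by
  rintro ⟨w, t⟩
  simp only [shearRefl, Prod.mk.injEq]
  refine ⟨?_, ?_⟩ <;> ring

theorem form_shear_shearRefl (x : R × R) : form (shear (shearRefl x)) = form (shear x) := by
  simp only [form, shear, shearRefl]
  ring

end Shear

theorem shear_injective : Function.Injective (shear (R := ℤ)) := by
  rintro ⟨w, t⟩ ⟨w', t'⟩ h
  simp only [shear, Prod.mk.injEq] at h ⊢
  omega

/-- The character by which sums over the binary lattice are twisted. -/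
def char (x : ℤ × ℤ) : ZMod 5 := χ₁₂ x.1 * χ₁₂ x.2

theorem char_shear_shearRefl (x : ℤ × ℤ) : char (shear (shearRefl x)) = -char (shear x) := by
  obtain ⟨w, t⟩ := x
  have mod_three : ∀ w t : ZMod 3, quadraticChar (ZMod 3) (w + 4 * t) *
      quadraticChar (ZMod 3) (2 * (w + 4 * t) + 5 * -t) =
        quadraticChar (ZMod 3) w * quadraticChar (ZMod 3) (2 * w + 5 * t) := by decide
  have mod_four : ∀ w t : ZMod 4, ZMod.χ₄ (w + 4 * t) * ZMod.χ₄ (2 * (w + 4 * t) + 5 * -t) =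
      -(ZMod.χ₄ w * ZMod.χ₄ (2 * w + 5 * t)) := by decide
  have h := congrArg (Int.cast : ℤ → ZMod 5) (congrArg₂ (· * ·) (mod_three w t) (mod_four w t))
  push_cast at h
  simp only [char, shear, shearRefl, χ₁₂, χ₃, χ₄]
  push_cast
  linear_combination h

theorem isAdmissible_char : IsAdmissible form char :=
  have h := isAdmissible_χ₁₂.map (Int.castRingHom (ZMod 5))
  h.mul h

/-- The series `∑ φ(x mod 5) * char x * q ^ form x`, linear in the weight `φ`. -/
def pairSum : (ZMod 5 × ZMod 5 → ZMod 5) →ₗ[ZMod 5] (ZMod 5)⟦X⟧ :=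
  isAdmissible_char.thetaMap ∘ₗ
    LinearMap.funLeft (ZMod 5) (ZMod 5) fun x : ℤ × ℤ => ((x.1 : ZMod 5), (x.2 : ZMod 5))

theorem pairSum_apply (φ : ZMod 5 × ZMod 5 → ZMod 5) :
    pairSum φ = thetaSeries form fun x => φ (x.1, x.2) * char x :=
  rfl

theorem etaTheta_mul_etaTheta (φ ψ : ZMod 5 → ZMod 5) :
    etaTheta φ * etaTheta ψ = pairSum fun x => φ x.1 * ψ x.2 := by
  rw [etaTheta_apply, etaTheta_apply,
    thetaSeries_mul (isAdmissible_etaTheta φ) (isAdmissible_etaTheta ψ), pairSum_apply]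
  congr 1
  funext x
  rw [char, mul_mul_mul_comm]

/-- The indicator of the isotropic line `u = 2w` of `form` over `𝔽₅`. -/
def lineWeight : ZMod 5 × ZMod 5 → ZMod 5 := fun x => if x.2 = 2 * x.1 then 1 else 0

theorem pairSum_lineWeight_eq_zero : pairSum lineWeight = 0 := by
  have hsupp : Function.support (fun x : ℤ × ℤ => lineWeight (x.1, x.2) * char x) ⊆
      Set.range shear := by
    rintro ⟨w, u⟩ h
    have huw : (u : ZMod 5) = 2 * w := (ite_ne_right_iff.mp (left_ne_zero_of_mul h)).1
    obtain ⟨t, ht⟩ : (5 : ℤ) ∣ u - 2 * w := by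
      refine (ZMod.intCast_zmod_eq_zero_iff_dvd _ 5).mp ?_
      push_cast
      rw [huw, sub_self]
    exact ⟨(w, t), by simp only [shear, ← ht]; ring_nf⟩
  have hline (x : ℤ × ℤ) : lineWeight ((shear x).1, (shear x).2) = 1 := by
    refine if_pos ?_
    simp only [shear]
    push_cast
    rw [show (5 : ZMod 5) = 0 from rfl, zero_mul, add_zero]
  rw [pairSum_apply, ← thetaSeries_comp_injective shear_injective hsupp]
  refine thetaSeries_eq_zero_of_comp_eq_neg (by decide) shearRefl_involutive
    form_shear_shearRefl (funext fun x => ?_)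
  simp only [Function.comp_apply, Pi.neg_apply, hline, one_mul, char_shear_shearRefl]

theorem pairSum_comp_neg (φ : ZMod 5 × ZMod 5 → ZMod 5) :
    pairSum (fun x => φ (-x.1, x.2)) = pairSum φ := by
  rw [pairSum_apply, pairSum_apply,
    ← thetaSeries_comp_involutive (σ := fun x : ℤ × ℤ => (-x.1, x.2)) (fun x => by simp)
      (fun x => by simp only [form, neg_sq])]
  congr 1
  funext x
  simp only [Function.comp_apply, char, χ₁₂_neg, Int.cast_neg, neg_neg]

end Binary

theorem etaPart_one_mul_etaPart_four : etaPart 1 * etaPart 4 = -etaPart 0 ^ 2 := by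
  have hline : (fun x => Binary.lineWeight (-x.1, x.2)) + Binary.lineWeight =
      (2 : ZMod 5) • (fun x => sqIndicator 0 x.1 * sqIndicator 0 x.2) +
        (fun x => sqIndicator 1 x.1 * sqIndicator 4 x.2) +
        fun x => sqIndicator 4 x.1 * sqIndicator 1 x.2 :=
    funext (by decide)
  have h := congrArg Binary.pairSum hline
  simp only [map_add, Binary.pairSum_comp_neg, Binary.pairSum_lineWeight_eq_zero,
    ← Binary.etaTheta_mul_etaTheta, ← etaPart_eq_etaTheta, add_zero, ofNat_smul_eq_nsmul,
    two_nsmul] at h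
  have two_mul : 2 * (etaPart 1 * etaPart 4 + etaPart 0 ^ 2) = 0 := by linear_combination -h
  exact eq_neg_of_add_eq_zero_left
    ((mul_eq_zero.mp two_mul).resolve_left two_ne_zero_zmod_five_powerSeries)

theorem five_eq_zero_zmod_five_powerSeries : (5 : (ZMod 5)⟦X⟧) = 0 := by
  rw [← map_ofNat C 5]
  exact map_zero C

theorem coeff_etaTheta_one_twentyFive : coeff 25 (etaTheta 1) ≠ 0 := by
  have hsupp : (Function.support fun u : ℤ => if u ^ 2 = (25 : ℕ) then
      (1 : ZMod 5 → ZMod 5) u * (χ₁₂ u : ZMod 5) else 0) ⊆ ↑({5, -5} : Finset ℤ) := by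
    intro u hu
    have hu : u ^ 2 = 5 ^ 2 := (ite_ne_right_iff.mp hu).1
    simpa using sq_eq_sq_iff_eq_or_eq_neg.mp hu
  rw [etaTheta_apply, coeff_thetaSeries, finsum_eq_sum_of_support_subset _ hsupp,
    Finset.sum_pair (by norm_num)]
  decide

theorem etaPart_one_sq_mul_etaPart_zero_add_ne_zero :
    etaPart 1 ^ 2 * etaPart 0 + 2 * etaPart 4 ^ 3 ≠ 0 := by
  intro h
  have hprod := etaPart_one_mul_etaPart_four
  have coeff_zero : coeff 25 (etaPart 0) ≠ 0 := by
    rw [etaPart, coeff_residuePart, if_pos (by decide)]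
    exact coeff_etaTheta_one_twentyFive
  have coeff_one : coeff 25 (etaPart 1) = 0 := by
    rw [etaPart, coeff_residuePart, if_neg (by decide)]
  generalize etaPart 0 = b at *
  generalize etaPart 1 = a at *
  generalize etaPart 4 = d at *
  have hpow : b * (a - 2 * b) ^ 5 = 0 := by
    linear_combination a ^ 3 * h - 2 * ((a * d) ^ 2 - (a * d) * b ^ 2 + b ^ 4) * hprod +
      b * (-2 * a ^ 4 * b + 8 * a ^ 3 * b ^ 2 - 16 * a ^ 2 * b ^ 3 + 16 * a * b ^ 4 - 6 * b ^ 5) *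
        five_eq_zero_zmod_five_powerSeries
  rcases mul_eq_zero.mp hpow with hb | hab
  · exact coeff_zero (by rw [hb, map_zero])
  · have hab := congrArg (coeff 25) (pow_eq_zero_iff (by norm_num) |>.mp hab)
    rw [map_sub, coeff_one, ← map_ofNat C 2, coeff_C_mul, map_zero, zero_sub, neg_eq_zero,
      mul_eq_zero] at hab
    exact coeff_zero (hab.resolve_left (by decide))

/-- The theta series `∑ χ₁₂(u) * q ^ u²` of `2η(24τ)`. -/
def etaSeries : ℤ⟦X⟧ := thetaSeries (fun u : ℤ => u ^ 2) χ₁₂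

/-- The theta series `∑ χ₄(b) * b * q ^ 3b²` of `2η(24τ)³`. -/
def etaCubeSeries : ℤ⟦X⟧ := thetaSeries (fun b : ℤ => 3 * b ^ 2) fun b => χ₄ b * b

/-- The weight `χ₄ b * χ₄ d * (b - 2d)`, restricted to the cone `0 < d(b - 2d)`. -/
def heckeWeight (p : ℤ × ℤ) : ℤ :=
  χ₄ p.1 * χ₄ p.2 * ((p.1 - 2 * p.2) * (p.2.sign + (p.1 - 2 * p.2).sign))

/-- The Hecke-type double sum which the generating function of `sT` is reduced to. -/
def heckeSeries : ℤ⟦X⟧ := thetaSeries (fun p : ℤ × ℤ => 3 * p.1 ^ 2 - 9 * p.2 ^ 2) heckeWeight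

/-- The indefinite theta series of `coneWeight`. -/
def coneSeries : ℤ⟦X⟧ := thetaSeries (fun p : ℤ × ℤ => p.1 ^ 2 - p.2 ^ 2) coneWeight

theorem isAdmissible_χ₄_mul :
    IsAdmissible (fun b : ℤ => 3 * b ^ 2) fun b => χ₄ b * b := by
  refine .of_abs_le (f := fun b _ => b) (η := Unit) (fun u v h => congrFun h ()) ?_
  exact fun b _ _ => abs_le_of_sq_le (by nlinarith [sq_nonneg b])

theorem mul_pos_of_heckeWeight_ne_zero {b d : ℤ} (h : heckeWeight (b, d) ≠ 0) :
    0 < d * (b - 2 * d) := by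
  have hb := odd_of_χ₄_ne_zero (left_ne_zero_of_mul (left_ne_zero_of_mul h))
  have hd := odd_of_χ₄_ne_zero (right_ne_zero_of_mul (left_ne_zero_of_mul h))
  simp only at hb hd
  exact mul_pos_of_sign_add_sign_ne_zero (by omega) (by omega)
    (right_ne_zero_of_mul (right_ne_zero_of_mul h))

theorem isAdmissible_heckeWeight :
    IsAdmissible (fun p : ℤ × ℤ => 3 * p.1 ^ 2 - 9 * p.2 ^ 2) heckeWeight := by
  refine .of_abs_le (f := fun p => ![p.1 - 2 * p.2, p.2]) ?_ ?_
  · rintro ⟨b, d⟩ ⟨b', d'⟩ h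
    simp only [Matrix.vecCons_inj, and_true, Prod.mk.injEq] at h ⊢
    omega
  · rintro ⟨b, d⟩ h
    have hpos := mul_pos_of_heckeWeight_ne_zero h
    rw [Fin.forall_fin_two]
    refine ⟨(abs_le_of_sq_le ?_ : |b - 2 * d| ≤ _), (abs_le_of_sq_le ?_ : |d| ≤ _)⟩ <;>
      nlinarith [sq_nonneg (b - 2 * d), sq_nonneg d]

theorem χ₄_three_mul (x : ℤ) : χ₄ (3 * x) = -χ₄ x := by
  have : ∀ z : ZMod 4, ZMod.χ₄ (3 * z) = -ZMod.χ₄ z := by decide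
  simp only [χ₄, Int.cast_mul, Int.cast_ofNat, this]

theorem coneWeight_three_mul (u d : ℤ) :
    coneWeight (u, 3 * d) = -(χ₁₂ u * χ₄ d * (d.sign + (u - 3 * d).sign)) := by
  rw [coneWeight, if_pos (dvd_mul_right 3 d), χ₄_three_mul, Int.sign_mul, ← neg_sub u (3 * d),
    Int.sign_neg, show (3 : ℤ).sign = 1 from rfl]
  ring

theorem etaCubeSeries_mul_coneSeries : etaCubeSeries * coneSeries =
    -thetaSeries Ternary.form ((fun x => x.2.1) * (Ternary.char * Ternary.coneUD)) := by
  have hsupp : Function.support (fun x : ℤ × ℤ × ℤ => χ₄ x.1 * x.1 * coneWeight x.2) ⊆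
      Set.range fun x : ℤ × ℤ × ℤ => (x.2.1, x.1, 3 * x.2.2) := by
    rintro ⟨b, u, c⟩ h
    have hc := right_ne_zero_of_mul (left_ne_zero_of_mul (right_ne_zero_of_mul h))
    obtain ⟨d, rfl⟩ := (ite_ne_right_iff.mp hc).1
    exact ⟨(u, b, d), rfl⟩
  have hinj : Function.Injective fun x : ℤ × ℤ × ℤ => (x.2.1, x.1, 3 * x.2.2) := by
    rintro ⟨u, b, d⟩ ⟨u', b', d'⟩ h
    simp only [Prod.mk.injEq] at h ⊢
    omega
  rw [etaCubeSeries, coneSeries, thetaSeries_mul isAdmissible_χ₄_mul isAdmissible_coneWeight,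
    ← thetaSeries_comp_injective hinj hsupp, ← thetaSeries_neg]
  congr 1 <;> funext ⟨u, b, d⟩
  · simp only [Function.comp_apply, Ternary.form]
    ring
  · simp only [Function.comp_apply, Pi.neg_apply, Pi.mul_apply, coneWeight_three_mul, Ternary.char,
      Ternary.coneUD]
    ring

theorem etaSeries_mul_heckeSeries : etaSeries * heckeSeries = -(etaCubeSeries * coneSeries) := by
  rw [etaCubeSeries_mul_coneSeries, neg_neg, ← Ternary.thetaSeries_coneBD_eq_coneUD, etaSeries,
    heckeSeries, thetaSeries_mul isAdmissible_χ₁₂ isAdmissible_heckeWeight]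
  congr 1 <;> funext ⟨u, b, d⟩
  · simp only [Ternary.form]
    ring
  · simp only [heckeWeight, Pi.mul_apply, Ternary.char, Ternary.coneBD]
    ring

theorem map_etaSeries : map (Int.castRingHom (ZMod 5)) etaSeries = etaTheta 1 := by
  rw [etaSeries, map_thetaSeries isAdmissible_χ₁₂, etaTheta_apply]
  simp only [Pi.one_apply, one_mul]
  rfl

theorem map_coneSeries : map (Int.castRingHom (ZMod 5)) coneSeries = coneTheta 1 := by
  rw [coneSeries, map_thetaSeries isAdmissible_coneWeight, coneTheta_apply]
  simp only [Pi.one_apply, one_mul]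
  rfl

theorem residuePart_zero_heckeSeries :
    residuePart (0 : ZMod 5) (map (Int.castRingHom (ZMod 5)) heckeSeries) = 0 := by
  have hzero : ∀ b d : ZMod 5, 3 * b ^ 2 - 9 * d ^ 2 = 0 → b - 2 * d = 0 := by decide
  rw [heckeSeries, map_thetaSeries isAdmissible_heckeWeight, residuePart_thetaSeries]
  ext n
  rw [coeff_thetaSeries, map_zero]
  refine finsum_eq_zero_of_forall_eq_zero fun p => ite_eq_right_iff.mpr fun _ => ?_
  simp only [Pi.mul_apply, ite_mul, one_mul, zero_mul, Function.comp_apply, heckeWeight]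
  refine ite_eq_right_iff.mpr fun hp => ?_
  push_cast at hp
  rw [eq_intCast]
  push_cast
  rw [hzero _ _ hp, zero_mul, mul_zero]

/-- Here `a`, `b`, `d` stand for `etaPart r` and `g₀`, …, `g₄` for the parts of `G`, and `hrel` is
the relation between the right-hand sides `k₀`, …, `k₃` of the equations. -/
theorem eliminate_residue_parts {A : Type*} [CommRing A] (five : (5 : A) = 0)
    {a b d g₀ g₁ g₂ g₃ g₄ k₀ k₁ k₂ k₃ : A}
    (hprod : a * d = -b ^ 2)
    (h₀ : a * g₄ + b * g₀ + d * g₁ = k₀) (h₁ : a * g₀ + b * g₁ + d * g₂ = k₁)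
    (h₂ : a * g₁ + b * g₂ + d * g₃ = k₂) (h₃ : a * g₂ + b * g₃ + d * g₄ = k₃)
    (hrel : a ^ 2 * k₂ + a * b * k₃ - b * d * k₀ - d ^ 2 * k₁ = 0)
    (hcube : a * (a * k₂ + b * k₃ + d * (a * g₃ + b * g₄ + d * g₀)) +
      b * (a * k₃ + b * (a * g₃ + b * g₄ + d * g₀) + d * k₀) +
      d * (a * (a * g₃ + b * g₄ + d * g₀) + b * k₀ + d * k₁) = 0) :
    (a ^ 2 * b + 2 * d ^ 3) * g₂ = 0 := by
  subst h₀ h₁ h₂ h₃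
  have from_rel : (a ^ 3 - 2 * b * d ^ 2) * g₁ + (2 * a ^ 2 * b - d ^ 3) * g₂ = 0 := by
    linear_combination hrel - (a * g₃ - d * g₀) * hprod
  have from_cube : (a ^ 3 + 3 * b * d ^ 2) * g₁ + (3 * a ^ 2 * b + d ^ 3) * g₂ = 0 := by
    linear_combination hcube - (3 * a * g₃ + 6 * b * g₄ + 3 * d * g₀) * hprod + b ^ 3 * g₄ * five
  linear_combination from_cube - from_rel - b * d ^ 2 * g₁ * five

theorem residuePart_two_eq_zero {G : (ZMod 5)⟦X⟧}
    (hcone : 2 * (etaTheta 1 * G) = X ^ 9 * coneTheta 1)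
    (hhecke : etaTheta 1 ^ 3 * G =
      -2 * (X ^ 9 * map (Int.castRingHom (ZMod 5)) heckeSeries)) :
    residuePart (2 : ZMod 5) G = 0 := by
  have hprod : etaTheta 1 * G = -2 * (X ^ 9 * coneTheta 1) := by
    linear_combination 3 * hcone + (X ^ 9 * coneTheta 1 - etaTheta 1 * G) *
      five_eq_zero_zmod_five_powerSeries
  have hpart (r : ZMod 5) : residuePart r (etaTheta 1 * G) =
      -2 * (X ^ 9 * residuePart (r - 4) (coneTheta 1)) := by
    rw [hprod, neg_mul, map_neg, two_mul, map_add, residuePart_X_pow_mul, ← two_mul, ← neg_mul]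
    rfl
  have hcube : residuePart (4 : ZMod 5) (etaTheta 1 * (etaTheta 1 * (etaTheta 1 * G))) = 0 := by
    rw [← mul_assoc, ← mul_assoc, ← pow_three', hhecke, ← map_ofNat C 2, ← map_neg,
      ← smul_eq_C_mul, map_smul, residuePart_X_pow_mul,
      show (4 : ZMod 5) - (9 : ℕ) = 0 from rfl, residuePart_zero_heckeSeries, mul_zero, smul_zero]
  have h₀ := hpart 0
  have h₁ := hpart 1
  have h₂ := hpart 2
  have h₃ := hpart 3
  simp only [residuePart_etaTheta_mul] at h₀ h₁ h₂ h₃ hcube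
  reduce_mod_char at h₀ h₁ h₂ h₃ hcube
  rw [residuePart_one_coneTheta] at h₀
  rw [residuePart_two_coneTheta] at h₁
  rw [residuePart_three_coneTheta] at h₂
  rw [residuePart_four_coneTheta] at h₃
  have hrel := sum_etaPart_mul_etaPart_mul_conePart_eq_zero
  refine (mul_eq_zero.mp (eliminate_residue_parts five_eq_zero_zmod_five_powerSeries
    etaPart_one_mul_etaPart_four h₀ h₁ h₂ h₃ ?_ ?_)).resolve_left
      etaPart_one_sq_mul_etaPart_zero_add_ne_zero
  · linear_combination -2 * X ^ 9 * hrel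
  · rw [← h₀, ← h₁, ← h₂, ← h₃]
    exact hcube

theorem etaSeries_ne_zero : etaSeries ≠ 0 := fun h =>
  coeff_etaTheta_one_twentyFive (by rw [← map_etaSeries, h, map_zero, map_zero])

section EulerProduct

variable {R : Type*} [CommRing R]

/-- The finite Euler product `(q; q)_n`. -/
def eulerProd (n : ℕ) : R⟦X⟧ := ∏ i ∈ Finset.range n, (1 - X ^ (i + 1))

/-- The inverse of `eulerProd n`. -/
def eulerInv (n : ℕ) : R⟦X⟧ := invOfUnit (eulerProd n) 1

/-- The exponent `i * (i + 1) / 2` of Jacobi's identity. -/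
def triangular (i : ℕ) : ℕ := i * (i + 1) / 2

theorem two_mul_triangular (i : ℕ) : 2 * triangular i = i * (i + 1) :=
  Nat.mul_div_cancel' (Nat.even_mul_succ_self i).two_dvd

theorem triangular_zero : triangular 0 = 0 := rfl

theorem triangular_succ (i : ℕ) : triangular (i + 1) = triangular i + (i + 1) := by
  have hi := two_mul_triangular i
  have hs := two_mul_triangular (i + 1)
  linarith

theorem le_triangular (i : ℕ) : i ≤ triangular i := by
  cases i with
  | zero => exact Nat.zero_le _
  | succ k => rw [triangular_succ]; exact Nat.le_add_left _ _

theorem eulerProd_zero : (eulerProd 0 : R⟦X⟧) = 1 := Finset.prod_range_zero _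

theorem eulerProd_succ (n : ℕ) :
    (eulerProd (n + 1) : R⟦X⟧) = eulerProd n * (1 - X ^ (n + 1)) :=
  Finset.prod_range_succ _ _

theorem eulerProd_mul_eulerInv (n : ℕ) : (eulerProd n * eulerInv n : R⟦X⟧) = 1 :=
  mul_invOfUnit _ _ (by simp [eulerProd])

theorem eulerInv_eq_mul_eulerInv_succ (n : ℕ) :
    (eulerInv n : R⟦X⟧) = (1 - X ^ (n + 1)) * eulerInv (n + 1) := by
  have h := eulerProd_mul_eulerInv (R := R) (n + 1)
  rw [eulerProd_succ] at h
  linear_combination ((1 - X ^ (n + 1)) * eulerInv (n + 1)) * eulerProd_mul_eulerInv (R := R) n -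
    eulerInv n * h

theorem sum_X_pow_mul_eulerInv (n : ℕ) :
    ∑ k ∈ Finset.range (n + 1), X ^ k * eulerInv k = (eulerInv n : R⟦X⟧) := by
  induction n with
  | zero => simp
  | succ n ih => rw [Finset.sum_range_succ, ih, eulerInv_eq_mul_eulerInv_succ n]; ring

/-- The `i`-th term of the finite form of Jacobi's identity for `(q; q)_N ^ 2`, without its
factor `2 * i + 1`. -/
def jacobiTerm (N i : ℕ) : R⟦X⟧ :=
  if i ≤ N then
    (-1) ^ i * X ^ triangular i * eulerProd (2 * N + 1) * eulerInv (N - i) * eulerInv (N + i + 1)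
  else 0

/-- The factor shared by the terms of the recurrence for `jacobiTerm`, where `a = N + 1 - i`. -/
def jacobiFactor (N i a : ℕ) : R⟦X⟧ :=
  (-1) ^ i * X ^ triangular i * eulerProd (2 * N + 1) * eulerInv a * eulerInv (N + i + 2)

theorem jacobiTerm_eq_zero {N i : ℕ} (h : N < i) : (jacobiTerm N i : R⟦X⟧) = 0 :=
  if_neg (Nat.not_le.mpr h)

theorem jacobiTerm_add (i a : ℕ) : (jacobiTerm (i + a) i : R⟦X⟧) =
    (-1) ^ i * X ^ triangular i * eulerProd (2 * (i + a) + 1) * eulerInv a *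
      eulerInv (i + a + i + 1) := by
  rw [jacobiTerm, if_pos (Nat.le_add_right i a), Nat.add_sub_cancel_left]

section Recurrence

variable {N i a : ℕ}

theorem jacobiTerm_succ_left (h : i + a = N + 1) : (jacobiTerm (N + 1) i : R⟦X⟧) =
    jacobiFactor N i a * ((1 - X ^ (2 * N + 2)) * (1 - X ^ (2 * N + 3))) := by
  rw [← h, jacobiTerm_add, h, show 2 * (N + 1) + 1 = 2 * N + 1 + 1 + 1 by ring, eulerProd_succ,
    eulerProd_succ, show N + 1 + i + 1 = N + i + 2 by ring, jacobiFactor]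
  ring

theorem jacobiTerm_eq_jacobiFactor_mul (h : i + a = N + 1) : (jacobiTerm N i : R⟦X⟧) =
    jacobiFactor N i a * ((1 - X ^ a) * (1 - X ^ (N + i + 2))) := by
  rcases a with _ | a
  · rw [jacobiTerm_eq_zero (by omega)]
    simp
  · obtain rfl : N = i + a := by omega
    rw [jacobiTerm_add, jacobiFactor, eulerInv_eq_mul_eulerInv_succ a,
      eulerInv_eq_mul_eulerInv_succ (i + a + i + 1)]
    ring_nf

theorem X_pow_mul_jacobiTerm_zero (N : ℕ) : (X ^ (N + 1) * jacobiTerm N 0 : R⟦X⟧) =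
    jacobiFactor N 0 (N + 1) * (X ^ (N + 1) * ((1 - X ^ (N + 1)) * (1 - X ^ (N + 2)))) := by
  rw [jacobiTerm_eq_jacobiFactor_mul (zero_add (N + 1))]
  ring

theorem X_pow_mul_jacobiTerm_pred (h : i + 1 + a = N + 1) : (X ^ (N + 1) * jacobiTerm N i : R⟦X⟧) =
    -jacobiFactor N (i + 1) a * (X ^ a * ((1 - X ^ (N + i + 2)) * (1 - X ^ (N + i + 3)))) := by
  obtain rfl : N = i + a := by omega
  rw [jacobiTerm_add, jacobiFactor, eulerInv_eq_mul_eulerInv_succ (_ + 1),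
    eulerInv_eq_mul_eulerInv_succ (_ + 1 + 1), triangular_succ]
  ring_nf

theorem X_pow_mul_jacobiTerm_succ (h : i + a = N + 1) :
    (X ^ (N + 1) * jacobiTerm N (i + 1) : R⟦X⟧) =
      -jacobiFactor N i a * ((X ^ (N + i + 2) - X ^ (2 * N + 2)) * (1 - X ^ a)) := by
  rcases a with _ | _ | a
  · rw [jacobiTerm_eq_zero (by omega)]
    simp
  · rw [jacobiTerm_eq_zero (by omega), show 2 * N + 2 = N + i + 2 by omega]
    simp
  · obtain rfl : N = i + 1 + a := by omega
    rw [jacobiTerm_add, jacobiFactor, eulerInv_eq_mul_eulerInv_succ a,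
      eulerInv_eq_mul_eulerInv_succ (a + 1), triangular_succ]
    ring_nf

theorem jacobiTerm_succ_zero (N : ℕ) : (jacobiTerm (N + 1) 0 : R⟦X⟧) =
    (1 + X ^ (2 * N + 2)) * jacobiTerm N 0 -
      X ^ (N + 1) * (jacobiTerm N 1 - jacobiTerm N 0) := by
  have h : 0 + (N + 1) = N + 1 := zero_add _
  rw [mul_sub, X_pow_mul_jacobiTerm_zero, ← zero_add 1, X_pow_mul_jacobiTerm_succ h,
    jacobiTerm_succ_left h, jacobiTerm_eq_jacobiFactor_mul h]
  ring

theorem jacobiTerm_succ_succ (h : i ≤ N) : (jacobiTerm (N + 1) (i + 1) : R⟦X⟧) =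
    (1 + X ^ (2 * N + 2)) * jacobiTerm N (i + 1) -
      X ^ (N + 1) * (jacobiTerm N i + jacobiTerm N (i + 2)) := by
  obtain ⟨a, rfl⟩ := Nat.exists_eq_add_of_le h
  have h : i + 1 + a = i + a + 1 := by ring
  rw [mul_add (X ^ _), X_pow_mul_jacobiTerm_pred h, X_pow_mul_jacobiTerm_succ h,
    jacobiTerm_succ_left h, jacobiTerm_eq_jacobiFactor_mul h]
  ring

end Recurrence

theorem sum_odd_mul_of_recurrence {f g : ℕ → R} {u v : R} {n : ℕ}
    (hzero : g 0 = u * f 0 - v * (f 1 - f 0))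
    (hsucc : ∀ i < n, g (i + 1) = u * f (i + 1) - v * (f i + f (i + 2))) :
    ∑ i ∈ Finset.range (n + 1), (2 * (i : R) + 1) * g i =
      (u - 2 * v) * ∑ i ∈ Finset.range (n + 1), (2 * (i : R) + 1) * f i -
        v * ((2 * n + 1) * f (n + 1) - (2 * n + 3) * f n) := by
  induction n with
  | zero =>
    simp [hzero]
    ring
  | succ n ih =>
    rw [Finset.sum_range_succ, Finset.sum_range_succ (n := n + 1),
      ih fun i hi => hsucc i (hi.trans n.lt_succ_self), hsucc n n.lt_succ_self]
    push_cast
    ring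

theorem sum_odd_mul_jacobiTerm (N : ℕ) :
    ∑ i ∈ Finset.range (N + 1), (2 * (i : R⟦X⟧) + 1) * jacobiTerm N i = eulerProd N ^ 2 := by
  induction N with
  | zero =>
    have h := jacobiTerm_add (R := R) 0 0
    simp only [Nat.add_zero, Nat.mul_zero, Nat.zero_add, triangular_zero, pow_zero, one_mul] at h
    rw [Finset.sum_range_one, h, mul_right_comm _ (eulerInv 0), eulerProd_mul_eulerInv]
    simpa [eulerProd_zero] using eulerProd_mul_eulerInv (R := R) 0
  | succ N ih =>
    rw [sum_odd_mul_of_recurrence (jacobiTerm_succ_zero N)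
      fun i hi => jacobiTerm_succ_succ (Nat.lt_succ_iff.mp hi), Finset.sum_range_succ, ih,
      jacobiTerm_eq_zero (N.lt_succ_self), jacobiTerm_eq_zero (i := N + 1 + 1) (by omega),
      eulerProd_succ]
    ring

end EulerProduct

section Truncation

variable {R : Type*} [CommRing R]

/-- Reduction modulo `X ^ M`, used to compare power series through finitely many coefficients. -/
def modXPow (M : ℕ) : R⟦X⟧ →+* R⟦X⟧ ⧸ Ideal.span {(X : R⟦X⟧) ^ M} := Ideal.Quotient.mk _

theorem modXPow_eq_iff {M : ℕ} {f g : R⟦X⟧} : modXPow M f = modXPow M g ↔ X ^ M ∣ f - g := by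
  rw [modXPow, Ideal.Quotient.eq, Ideal.mem_span_singleton]

theorem modXPow_eq_iff_coeff {M : ℕ} {f g : R⟦X⟧} :
    modXPow M f = modXPow M g ↔ ∀ k < M, coeff k f = coeff k g := by
  simp only [modXPow_eq_iff, X_pow_dvd_iff, map_sub, sub_eq_zero]

theorem modXPow_X_pow {M k : ℕ} (h : M ≤ k) : modXPow M (X ^ k : R⟦X⟧) = 0 := by
  rw [← map_zero (modXPow M), modXPow_eq_iff, sub_zero]
  exact pow_dvd_pow _ h

theorem modXPow_X_pow_mul {M k j : ℕ} (h : M ≤ j + k) {f g : R⟦X⟧}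
    (hfg : modXPow k f = modXPow k g) : modXPow M (X ^ j * f) = modXPow M (X ^ j * g) := by
  rw [modXPow_eq_iff] at hfg ⊢
  rw [← mul_sub]
  exact (pow_dvd_pow _ h).trans ((pow_add (X : R⟦X⟧) j k).symm ▸ mul_dvd_mul_left _ hfg)

theorem modXPow_eulerProd_add (n k : ℕ) :
    modXPow (n + 1) (eulerProd (n + k) : R⟦X⟧) = modXPow (n + 1) (eulerProd n) := by
  induction k with
  | zero => rfl
  | succ k ih =>
    rw [← add_assoc, eulerProd_succ, map_mul, ih, map_sub, modXPow_X_pow (by omega), sub_zero,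
      map_one, mul_one]

theorem modXPow_eulerProd {M n : ℕ} (h : M ≤ n + 1) :
    modXPow M (eulerProd n) = modXPow M (pentagonalSeries R) := by
  refine modXPow_eq_iff_coeff.mpr fun k hk => ?_
  obtain ⟨s, hs⟩ := Filter.eventually_atTop.mp (coeff_prod_one_sub_X_pow_eventually_eq R k)
  obtain ⟨r, hr⟩ := s.exists_nat_subset_range
  rw [← hs (Finset.range (n + r)) (hr.trans (Finset.range_mono (Nat.le_add_left r n)))]
  exact (modXPow_eq_iff_coeff.mp (modXPow_eulerProd_add n r) k (by omega)).symm

theorem modXPow_pentagonalSeries_mul_eulerInv {M n : ℕ} (h : M ≤ n + 1) :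
    modXPow M (pentagonalSeries R) * modXPow M (eulerInv n) = 1 := by
  rw [← modXPow_eulerProd h, ← map_mul, eulerProd_mul_eulerInv, map_one]

theorem modXPow_pentagonalSeries_mul_jacobiTerm {N i : ℕ} (hi : i ≤ N) :
    modXPow (N + 1) (pentagonalSeries R * jacobiTerm N i) =
      modXPow (N + 1) ((-1) ^ i * X ^ triangular i) := by
  have hT := le_triangular i
  have h : modXPow (N + 1 - i) (pentagonalSeries R * eulerProd (2 * N + 1) * eulerInv (N - i) *
      eulerInv (N + i + 1)) = modXPow (N + 1 - i) 1 := by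
    simp only [map_mul, map_one]
    rw [modXPow_eulerProd (by omega), mul_right_comm _ _ (modXPow _ (eulerInv (N - i))),
      modXPow_pentagonalSeries_mul_eulerInv (by omega), one_mul,
      modXPow_pentagonalSeries_mul_eulerInv (by omega)]
  have hterm : pentagonalSeries R * jacobiTerm N i = (-1) ^ i * (X ^ triangular i *
      (pentagonalSeries R * eulerProd (2 * N + 1) * eulerInv (N - i) * eulerInv (N + i + 1))) := by
    rw [jacobiTerm, if_pos hi]
    ring
  rw [hterm, map_mul, modXPow_X_pow_mul (by omega) h, ← map_mul, mul_one]

theorem modXPow_pentagonalSeries_pow_three (N : ℕ) :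
    modXPow (N + 1) (pentagonalSeries R ^ 3) = modXPow (N + 1)
      (∑ i ∈ Finset.range (N + 1), C ((2 * (i : R) + 1) * (-1) ^ i) * X ^ triangular i) := by
  have h : modXPow (N + 1) (pentagonalSeries R ^ 3) =
      modXPow (N + 1) (pentagonalSeries R * eulerProd N ^ 2) := by
    rw [pow_succ' (pentagonalSeries R), map_mul, map_mul, map_pow, map_pow,
      modXPow_eulerProd le_rfl]
  rw [h, ← sum_odd_mul_jacobiTerm, Finset.mul_sum, map_sum, map_sum]
  refine Finset.sum_congr rfl fun i hi => ?_
  rw [mul_left_comm, map_mul,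
    modXPow_pentagonalSeries_mul_jacobiTerm (Nat.lt_succ_iff.mp (Finset.mem_range.mp hi)),
    ← map_mul, ← mul_assoc]
  simp [map_ofNat C 2]

end Truncation

section PartialTheta

variable {R : Type*} [CommRing R]

/-- The truncated Durfee-type sum `∑ q ^ k / ((q; q)_k (q; q)_{k + c})` over `k < m`. -/
def durfeeSum (c m : ℕ) : R⟦X⟧ := ∑ k ∈ Finset.range m, X ^ k * eulerInv k * eulerInv (k + c)

theorem durfeeSum_succ (c m : ℕ) :
    (durfeeSum c (m + 1) : R⟦X⟧) = durfeeSum c m + X ^ m * eulerInv m * eulerInv (m + c) :=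
  Finset.sum_range_succ _ _

theorem durfeeSum_add_sub_durfeeSum_add (c m : ℕ) :
    (durfeeSum c m + X ^ (c + 1) * durfeeSum (c + 1) m -
      (durfeeSum (c + 1) m + X ^ (c + 2) * durfeeSum (c + 2) m) : R⟦X⟧) =
        X ^ m * (-X ^ (c + 1) * (1 - X ^ m) * eulerInv m * eulerInv (m + c + 1)) := by
  induction m with
  | zero => simp [durfeeSum]
  | succ m ih =>
    have h0 : (eulerInv (m + c) : R⟦X⟧) = _ := eulerInv_eq_mul_eulerInv_succ _
    have h1 : (eulerInv (m + c + 1) : R⟦X⟧) = _ := eulerInv_eq_mul_eulerInv_succ _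
    simp only [durfeeSum_succ, ← add_assoc, show m + 1 + c + 1 = m + c + 1 + 1 by ring, h0]
    rw [eulerInv_eq_mul_eulerInv_succ m] at ih ⊢
    rw [h1] at ih ⊢
    linear_combination ih

theorem modXPow_durfeeSum_add (c m j : ℕ) :
    modXPow m (durfeeSum c m + X ^ (c + 1) * durfeeSum (c + 1) m : R⟦X⟧) =
      modXPow m (durfeeSum (c + j) m + X ^ (c + j + 1) * durfeeSum (c + j + 1) m) := by
  induction j with
  | zero => rfl
  | succ j ih =>
    rw [ih, modXPow_eq_iff]
    exact ⟨_, durfeeSum_add_sub_durfeeSum_add (c + j) m⟩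

theorem modXPow_pentagonalSeries_sq_mul_durfeeSum_of_le {c m : ℕ} (h : m ≤ c) :
    modXPow m (pentagonalSeries R ^ 2 * durfeeSum c m) = 1 := by
  rcases m with _ | m
  · rw [← map_one (modXPow 0), modXPow_eq_iff, pow_zero]
    exact one_dvd _
  have hterm (k : ℕ) :
      modXPow (m + 1) (pentagonalSeries R * (X ^ k * eulerInv k * eulerInv (k + c))) =
        modXPow (m + 1) (X ^ k * eulerInv k) := by
    rw [mul_left_comm, map_mul, map_mul _ (pentagonalSeries R),
      modXPow_pentagonalSeries_mul_eulerInv (by omega), mul_one]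
  rw [sq, mul_assoc, map_mul, durfeeSum, Finset.mul_sum, map_sum]
  simp only [hterm]
  rw [← map_sum, sum_X_pow_mul_eulerInv, modXPow_pentagonalSeries_mul_eulerInv le_rfl]

theorem modXPow_pentagonalSeries_sq_mul_durfeeSum_add (c m : ℕ) :
    modXPow m (pentagonalSeries R ^ 2 * (durfeeSum c m + X ^ (c + 1) * durfeeSum (c + 1) m)) =
      1 := by
  rw [map_mul, modXPow_durfeeSum_add c m m, map_add, map_mul _ (X ^ _), modXPow_X_pow (by omega),
    zero_mul, add_zero, ← map_mul,
    modXPow_pentagonalSeries_sq_mul_durfeeSum_of_le (Nat.le_add_left m c)]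

theorem modXPow_pentagonalSeries_sq_mul_durfeeSum_eq_add (c m J : ℕ) :
    modXPow m (pentagonalSeries R ^ 2 * durfeeSum c m) =
      modXPow m (∑ j ∈ Finset.range J, (-1) ^ j * X ^ (triangular j + c * j) +
        (-1) ^ J * X ^ (triangular J + c * J) *
          (pentagonalSeries R ^ 2 * durfeeSum (c + J) m)) := by
  induction J with
  | zero => simp [triangular]
  | succ J ih =>
    have h := modXPow_pentagonalSeries_sq_mul_durfeeSum_add (R := R) (c + J) m
    have hexp : triangular (J + 1) + c * (J + 1) = triangular J + c * J + (c + J + 1) := by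
      rw [triangular_succ]
      ring
    rw [ih, Finset.sum_range_succ, hexp, ← add_assoc c J 1]
    simp only [map_mul, map_add, map_pow, map_neg, map_one] at h ⊢
    linear_combination ((-1) ^ J * modXPow m X ^ (triangular J + c * J)) * h

theorem modXPow_pentagonalSeries_sq_mul_durfeeSum (c : ℕ) {m J : ℕ} (h : m ≤ J) :
    modXPow m (pentagonalSeries R ^ 2 * durfeeSum c m) =
      modXPow m (∑ j ∈ Finset.range J, (-1) ^ j * X ^ (triangular j + c * j)) := by
  have hJ := le_triangular J
  rw [modXPow_pentagonalSeries_sq_mul_durfeeSum_eq_add c m J, map_add, map_mul,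
    map_mul _ ((-1) ^ J), modXPow_X_pow (by omega), mul_zero, zero_mul, add_zero]

end PartialTheta

section SmallestPartSum

variable {R : Type*} [CommRing R]

/-- The truncation to `N < M` of `∑ q ^ (N + 1) (q; q)_N ^ 2 / (q; q)_{2 N + 1}`, whose `N`-th term
accounts for the pairs in `𝒮𝒯` with `s(π₁) = N + 1`. -/
def smallestPartSum (M : ℕ) : R⟦X⟧ :=
  ∑ N ∈ Finset.range M, X ^ (N + 1) * eulerProd N ^ 2 * eulerInv (2 * N + 1)

/-- The exponents of the Hecke-type double sum `(q; q)_∞ ^ 3 ∑ sT(n) q ^ n`. -/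
def heckeExponent (p : ℕ × ℕ) : ℕ :=
  triangular p.1 + (p.1 + 1) + (triangular p.2 + (2 * p.1 + 1) * p.2)

theorem X_pow_mul_eulerProd_sq_mul_eulerInv (N : ℕ) :
    (X ^ (N + 1) * eulerProd N ^ 2 * eulerInv (2 * N + 1) : R⟦X⟧) =
      ∑ i ∈ Finset.range (N + 1), X ^ (triangular i + (i + 1)) * ((2 * (i : R⟦X⟧) + 1) * (-1) ^ i) *
        (X ^ (N - i) * eulerInv (N - i) * eulerInv (N - i + (2 * i + 1))) := by
  rw [← sum_odd_mul_jacobiTerm, Finset.mul_sum, Finset.sum_mul]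
  refine Finset.sum_congr rfl fun i hi => ?_
  obtain ⟨a, rfl⟩ := Nat.exists_eq_add_of_le (Nat.lt_succ_iff.mp (Finset.mem_range.mp hi))
  rw [jacobiTerm_add, Nat.add_sub_cancel_left, show a + (2 * i + 1) = i + a + i + 1 by ring]
  linear_combination (X ^ (i + a + 1) * (2 * (i : R⟦X⟧) + 1) * (-1) ^ i * X ^ triangular i *
    eulerInv a * eulerInv (i + a + i + 1)) * eulerProd_mul_eulerInv (R := R) (2 * (i + a) + 1)

theorem smallestPartSum_eq_sum_durfeeSum (M : ℕ) :
    (smallestPartSum M : R⟦X⟧) = ∑ i ∈ Finset.range M, X ^ (triangular i + (i + 1)) *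
      ((2 * (i : R⟦X⟧) + 1) * (-1) ^ i) * durfeeSum (2 * i + 1) (M - i) := by
  simp only [smallestPartSum, X_pow_mul_eulerProd_sq_mul_eulerInv, durfeeSum, Finset.mul_sum]
  exact Finset.sum_range_diag_flip M fun i k => X ^ (triangular i + (i + 1)) *
    ((2 * (i : R⟦X⟧) + 1) * (-1) ^ i) * (X ^ k * eulerInv k * eulerInv (k + (2 * i + 1)))

theorem modXPow_pentagonalSeries_sq_mul_smallestPartSum (M : ℕ) :
    modXPow M (pentagonalSeries R ^ 2 * smallestPartSum M) =
      modXPow M (∑ p ∈ Finset.range M ×ˢ Finset.range M,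
        C ((2 * (p.1 : R) + 1) * (-1) ^ (p.1 + p.2)) * X ^ heckeExponent p) := by
  rw [smallestPartSum_eq_sum_durfeeSum, Finset.mul_sum, map_sum, Finset.sum_product, map_sum]
  refine Finset.sum_congr rfl fun i _ => ?_
  have h := modXPow_X_pow_mul (M := M) (j := triangular i + (i + 1)) (by omega)
    (modXPow_pentagonalSeries_sq_mul_durfeeSum (R := R) (2 * i + 1) (Nat.sub_le M i))
  have hcomm : pentagonalSeries R ^ 2 * (X ^ (triangular i + (i + 1)) *
      ((2 * (i : R⟦X⟧) + 1) * (-1) ^ i) * durfeeSum (2 * i + 1) (M - i)) =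
      ((2 * (i : R⟦X⟧) + 1) * (-1) ^ i) * (X ^ (triangular i + (i + 1)) *
        (pentagonalSeries R ^ 2 * durfeeSum (2 * i + 1) (M - i))) := by ring
  rw [hcomm, map_mul, h, ← map_mul, Finset.mul_sum, Finset.mul_sum]
  congr 1
  refine Finset.sum_congr rfl fun j _ => ?_
  simp only [map_mul, map_add, map_pow, map_neg, map_one, map_natCast, map_ofNat C 2,
    heckeExponent, pow_add X (triangular i + (i + 1)), pow_add (-1 : R⟦X⟧) i]
  ring

end SmallestPartSum

section PartitionsWithParts

/-- The partitions of `n` with all parts in `A`; this reading requires `0 ∉ A`. -/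
def partitionsWithParts (A : Finset ℕ) (n : ℕ) : Set (Multiset ℕ) :=
  {m | (∀ x ∈ m, x ∈ A) ∧ m.sum = n}

theorem finite_partitionsWithParts {A : Finset ℕ} (hA : 0 ∉ A) (n : ℕ) :
    (partitionsWithParts A n).Finite := by
  refine (Set.finite_range fun p : n.Partition => p.parts).subset ?_
  rintro m ⟨hmem, hsum⟩
  exact ⟨⟨m, fun hi => Nat.pos_of_ne_zero fun h => hA (h ▸ hmem _ hi), hsum⟩, rfl⟩

theorem partitionsWithParts_empty (n : ℕ) :
    partitionsWithParts ∅ n = if n = 0 then {0} else ∅ := by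
  ext m
  have hm : (∀ x ∈ m, x ∈ (∅ : Finset ℕ)) ↔ m = 0 := by
    simp [Multiset.eq_zero_iff_forall_notMem]
  change _ ∧ m.sum = n ↔ _
  rw [hm]
  split_ifs with hn
  · exact ⟨fun h => h.1, fun h => ⟨h, by rw [h, hn, Multiset.sum_zero]⟩⟩
  · exact iff_of_false (fun h => hn (by rw [← h.2, h.1, Multiset.sum_zero])) id

theorem partitionsWithParts_insert (B : Finset ℕ) (a n : ℕ) :
    partitionsWithParts (insert a B) n =
      partitionsWithParts B n ∪ {m ∈ partitionsWithParts (insert a B) n | a ∈ m} := by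
  ext m
  constructor
  · rintro ⟨hmem, hsum⟩
    by_cases ha : a ∈ m
    · exact Or.inr ⟨⟨hmem, hsum⟩, ha⟩
    · exact Or.inl ⟨fun x hx => Finset.mem_of_mem_insert_of_ne (hmem x hx)
        fun h => ha (h ▸ hx), hsum⟩
  · rintro (⟨hmem, hsum⟩ | h)
    · exact ⟨fun x hx => Finset.mem_insert_of_mem (hmem x hx), hsum⟩
    · exact h.1

theorem sep_mem_partitionsWithParts {A : Finset ℕ} {a : ℕ} (ha : a ∈ A) (n : ℕ) :
    {m ∈ partitionsWithParts A (a + n) | a ∈ m} = Multiset.cons a '' partitionsWithParts A n := by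
  ext m
  constructor
  · rintro ⟨⟨hmem, hsum⟩, ham⟩
    obtain ⟨t, rfl⟩ := Multiset.exists_cons_of_mem ham
    rw [Multiset.sum_cons] at hsum
    exact ⟨t, ⟨fun x hx => hmem x (Multiset.mem_cons_of_mem hx), Nat.add_left_cancel hsum⟩, rfl⟩
  · rintro ⟨t, ⟨hmem, rfl⟩, rfl⟩
    exact ⟨⟨Multiset.forall_mem_cons.mpr ⟨ha, hmem⟩, Multiset.sum_cons a t⟩,
      Multiset.mem_cons_self a t⟩

/-- The generating series of the numbers of partitions with all parts in `A`. -/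
def partitionSeries (A : Finset ℕ) : ℤ⟦X⟧ := mk fun n => ((partitionsWithParts A n).ncard : ℤ)

theorem mk_ncard_sep_mem_partitionsWithParts {A : Finset ℕ} {a : ℕ} (ha : a ∈ A) :
    (mk fun n => ({m ∈ partitionsWithParts A n | a ∈ m}.ncard : ℤ)) =
      X ^ a * partitionSeries A := by
  ext n
  rw [coeff_mk, coeff_X_pow_mul']
  split_ifs with h
  · obtain ⟨k, rfl⟩ := Nat.exists_eq_add_of_le h
    rw [sep_mem_partitionsWithParts ha,
      Set.ncard_image_of_injective _ fun _ _ => (Multiset.cons_inj_right a).mp, partitionSeries,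
      coeff_mk, Nat.add_sub_cancel_left]
  · have hempty : {m ∈ partitionsWithParts A n | a ∈ m} = ∅ :=
      Set.eq_empty_of_forall_notMem fun m hm => h (hm.1.2 ▸ Multiset.le_sum_of_mem hm.2)
    rw [hempty, Set.ncard_empty, Nat.cast_zero]

theorem partitionSeries_empty : partitionSeries ∅ = 1 := by
  ext n
  rw [partitionSeries, coeff_mk, partitionsWithParts_empty, coeff_one]
  split_ifs <;> simp

theorem partitionSeries_insert {B : Finset ℕ} {a : ℕ} (ha : a ∉ B) (h0 : 0 ∉ insert a B) :
    partitionSeries (insert a B) = partitionSeries B + X ^ a * partitionSeries (insert a B) := by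
  rw [← mk_ncard_sep_mem_partitionsWithParts (Finset.mem_insert_self a B)]
  ext n
  have hfin := finite_partitionsWithParts h0 n
  have hdisj : Disjoint (partitionsWithParts B n)
      {m ∈ partitionsWithParts (insert a B) n | a ∈ m} :=
    Set.disjoint_left.mpr fun m hm hm' => ha (hm.1 a hm'.2)
  rw [map_add, coeff_mk, partitionSeries, partitionSeries, coeff_mk, coeff_mk, ← Nat.cast_add,
    ← Set.ncard_union_eq hdisj (hfin.subset (partitionsWithParts_insert B a n ▸
      Set.subset_union_left)) (hfin.subset (Set.sep_subset _ _)), ← partitionsWithParts_insert]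

theorem partitionSeries_mul_prod {A : Finset ℕ} (h0 : 0 ∉ A) :
    partitionSeries A * ∏ a ∈ A, (1 - X ^ a) = 1 := by
  induction A using Finset.induction_on with
  | empty => rw [partitionSeries_empty, Finset.prod_empty, mul_one]
  | insert a B ha ih =>
    rw [Finset.prod_insert ha]
    linear_combination (∏ b ∈ B, (1 - X ^ b : ℤ⟦X⟧)) * partitionSeries_insert ha h0 +
      ih fun h => h0 (Finset.mem_insert_of_mem h)

theorem zero_notMem_Ico {a : ℕ} (ha : 0 < a) (b : ℕ) : 0 ∉ Finset.Ico a b := by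
  simp [ha.ne']

theorem eulerProd_mul_prod_Ico {a b : ℕ} (h : a ≤ b) :
    eulerProd a * ∏ i ∈ Finset.Ico (a + 1) (b + 1), (1 - X ^ i : ℤ⟦X⟧) = eulerProd b := by
  induction b, h using Nat.le_induction with
  | base => simp
  | succ b hb ih => rw [Finset.prod_Ico_succ_top (by omega), ← mul_assoc, ih, eulerProd_succ]

theorem partitionSeries_Ico {a b : ℕ} (h : a ≤ b) :
    partitionSeries (Finset.Ico (a + 1) (b + 1)) = eulerProd a * eulerInv b := by
  have hprod := partitionSeries_mul_prod (zero_notMem_Ico a.succ_pos (b + 1))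
  have hinv := eulerProd_mul_eulerInv (R := ℤ) b
  rw [← eulerProd_mul_prod_Ico h] at hinv
  linear_combination (eulerProd a * eulerInv b) * hprod -
    partitionSeries (Finset.Ico (a + 1) (b + 1)) * hinv

end PartitionsWithParts

section PartitionPairs

theorem le_sPart_iff {π : Multiset ℕ} {a : ℕ} : (a : ℕ∞) ≤ sPart π ↔ ∀ x ∈ π, a ≤ x := by
  simp [sPart, Multiset.le_inf]

theorem sPart_le_of_mem {π : Multiset ℕ} {a : ℕ} (h : a ∈ π) : sPart π ≤ a :=
  Multiset.inf_le (by simp [h])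

theorem sPart_eq_iff {π : Multiset ℕ} {a : ℕ} (h : a ∈ π) : sPart π = a ↔ ∀ x ∈ π, a ≤ x := by
  rw [← le_sPart_iff, le_antisymm_iff, and_iff_right (sPart_le_of_mem h)]

theorem exists_mem_sPart_eq {π : Multiset ℕ} (h : π ≠ 0) : ∃ a ∈ π, sPart π = a := by
  obtain ⟨a, ha, hmin⟩ := π.toFinset.exists_min_image id (by simpa using h)
  rw [Multiset.mem_toFinset] at ha
  exact ⟨a, ha, (sPart_eq_iff ha).mpr fun x hx => hmin x (Multiset.mem_toFinset.mpr hx)⟩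

theorem lPart_lt_iff {π : Multiset ℕ} {a : ℕ} (ha : 0 < a) : lPart π < a ↔ ∀ x ∈ π, x < a :=
  ⟨fun h _ hx => (Multiset.le_sup hx).trans_lt h, fun h => by
    have hle : lPart π ≤ a - 1 := Multiset.sup_le.mpr fun x hx => Nat.le_sub_one_of_lt (h x hx)
    omega⟩

theorem inST_iff {p : Multiset ℕ × Multiset ℕ} :
    InST p ↔ ∃ s > 0, s ∈ p.1 ∧ (∀ x ∈ p.1, s ≤ x) ∧ ∀ x ∈ p.2, s ≤ x ∧ x < 2 * s := by
  have hcast (s : ℕ) : (lPart p.2 : ℕ∞) < 2 * s ↔ lPart p.2 < 2 * s := by exact_mod_cast Iff.rfl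
  constructor
  · rintro ⟨hpos, -, hne, hs, hl⟩
    obtain ⟨s, hmem, hsPart⟩ := exists_mem_sPart_eq hne
    have hs0 := hpos s hmem
    rw [hsPart, le_sPart_iff] at hs
    rw [hsPart, hcast, lPart_lt_iff (by omega)] at hl
    exact ⟨s, hs0, hmem, (sPart_eq_iff hmem).mp hsPart, fun x hx => ⟨hs x hx, hl x hx⟩⟩
  · rintro ⟨s, hs0, hmem, hmin, hIco⟩
    rw [InST, (sPart_eq_iff hmem).mpr hmin, le_sPart_iff, hcast, lPart_lt_iff (by omega)]
    exact ⟨fun x hx => hs0.trans_le (hmin x hx), fun x hx => hs0.trans_le (hIco x hx).1,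
      fun h => Multiset.notMem_zero s (h ▸ hmem), fun x hx => (hIco x hx).1,
      fun x hx => (hIco x hx).2⟩

/-- The pairs `(π₁, π₂)` in `𝒮𝒯` with `s(π₁) = t.1`, `|π₁| = t.2.1` and `|π₂| = t.2.2`, provided
that `0 < t.1` and `t.2.1 < M`. -/
def pairsWithSmallestPart (M : ℕ) (t : ℕ × ℕ × ℕ) : Set (Multiset ℕ × Multiset ℕ) :=
  {m ∈ partitionsWithParts (Finset.Ico t.1 M) t.2.1 | t.1 ∈ m} ×ˢ
    partitionsWithParts (Finset.Ico t.1 (2 * t.1)) t.2.2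

theorem setOf_inST_eq_biUnion {n M : ℕ} (h : n < M) :
    {p : Multiset ℕ × Multiset ℕ | InST p ∧ p.1.sum + p.2.sum = n} =
      ⋃ t ∈ (Finset.Ico 1 M ×ˢ Finset.HasAntidiagonal.antidiagonal n : Finset (ℕ × ℕ × ℕ)),
        pairsWithSmallestPart M t := by
  ext ⟨p, r⟩
  simp only [Set.mem_iUnion, Finset.mem_product, exists_prop,
    Finset.HasAntidiagonal.mem_antidiagonal, Set.mem_ofPred_eq, inST_iff]
  constructor
  · rintro ⟨⟨s, hs0, hmem, hmin, hIco⟩, hsum⟩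
    have hlt {x : ℕ} (hx : x ∈ p) : x < M := by
      have := Multiset.le_sum_of_mem hx
      omega
    exact ⟨(s, p.sum, r.sum), ⟨Finset.mem_Ico.mpr ⟨hs0, hlt hmem⟩, hsum⟩,
      ⟨⟨fun x hx => Finset.mem_Ico.mpr ⟨hmin x hx, hlt hx⟩, rfl⟩, hmem⟩,
      fun x hx => Finset.mem_Ico.mpr (hIco x hx), rfl⟩
  · rintro ⟨⟨s, i, j⟩, ⟨hs, hsum⟩, ⟨⟨hp, rfl⟩, hmem⟩, hr, rfl⟩
    exact ⟨⟨s, (Finset.mem_Ico.mp hs).1, hmem, fun x hx => (Finset.mem_Ico.mp (hp x hx)).1,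
      fun x hx => Finset.mem_Ico.mp (hr x hx)⟩, hsum⟩

theorem disjoint_pairsWithSmallestPart (M : ℕ) {t t' : ℕ × ℕ × ℕ} (h : t ≠ t') :
    Disjoint (pairsWithSmallestPart M t) (pairsWithSmallestPart M t') := by
  obtain ⟨s, i, j⟩ := t
  obtain ⟨s', i', j'⟩ := t'
  refine Set.disjoint_left.mpr ?_
  rintro ⟨p, r⟩ ⟨⟨⟨hp, rfl⟩, hmem⟩, -, rfl⟩ ⟨⟨⟨hp', rfl⟩, hmem'⟩, -, rfl⟩
  have hle : s ≤ s' := (Finset.mem_Ico.mp (hp s' hmem')).1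
  have hge : s' ≤ s := (Finset.mem_Ico.mp (hp' s hmem)).1
  exact h (by rw [le_antisymm hle hge])

theorem sT_eq_sum {n M : ℕ} (h : n < M) :
    sT n = ∑ s ∈ Finset.Ico 1 M, ∑ t ∈ Finset.HasAntidiagonal.antidiagonal n,
      {m ∈ partitionsWithParts (Finset.Ico s M) t.1 | s ∈ m}.ncard *
        (partitionsWithParts (Finset.Ico s (2 * s)) t.2).ncard := by
  rw [sT, setOf_inST_eq_biUnion h]
  refine ((Finset.finite_toSet _).ncard_biUnion (fun t ht => ?_)
    fun t _ t' _ => disjoint_pairsWithSmallestPart M).trans ?_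
  · have h0 := zero_notMem_Ico (Finset.mem_Ico.mp (Finset.mem_product.mp ht).1).1
    exact ((finite_partitionsWithParts (h0 _) _).subset (Set.sep_subset _ _)).prod
      (finite_partitionsWithParts (h0 _) _)
  · rw [finsum_mem_coe_finset, Finset.sum_product]
    simp only [pairsWithSmallestPart, Set.ncard_prod]

/-- The generating series of `sT`. -/
def sTSeries : ℤ⟦X⟧ := mk fun n => (sT n : ℤ)

theorem modXPow_sTSeries (M : ℕ) : modXPow M sTSeries = modXPow M (∑ N ∈ Finset.range M,
    X ^ (N + 1) * partitionSeries (Finset.Ico (N + 1) (M + 1)) *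
      partitionSeries (Finset.Ico (N + 1) (2 * N + 1 + 1))) := by
  refine modXPow_eq_iff_coeff.mpr fun n hn => ?_
  rw [sTSeries, coeff_mk, map_sum, sT_eq_sum (hn.trans M.lt_succ_self), Nat.cast_sum,
    Finset.sum_Ico_eq_sum_range]
  refine Finset.sum_congr rfl fun N hN => ?_
  have hmem : N + 1 ∈ Finset.Ico (N + 1) (M + 1) :=
    Finset.mem_Ico.mpr ⟨le_rfl, Nat.succ_lt_succ (Finset.mem_range.mp hN)⟩
  rw [← mk_ncard_sep_mem_partitionsWithParts hmem, partitionSeries, coeff_mul, Nat.cast_sum,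
    add_comm 1 N]
  simp only [coeff_mk, Nat.cast_mul, mul_add, mul_one]

theorem modXPow_pentagonalSeries_mul_sTSeries (M : ℕ) :
    modXPow M (pentagonalSeries ℤ * sTSeries) = modXPow M (smallestPartSum M) := by
  rw [map_mul, modXPow_sTSeries, smallestPartSum, map_sum, map_sum, Finset.mul_sum]
  refine Finset.sum_congr rfl fun N hN => ?_
  rw [partitionSeries_Ico (Finset.mem_range.mp hN).le, partitionSeries_Ico (by omega)]
  simp only [map_mul, map_pow]
  linear_combination (modXPow M X ^ (N + 1) * modXPow M (eulerProd N) ^ 2 *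
    modXPow M (eulerInv (2 * N + 1))) *
      modXPow_pentagonalSeries_mul_eulerInv (R := ℤ) M.le_succ

end PartitionPairs

section Dilation

variable {R ι κ : Type*} [CommRing R]

theorem eq_thetaSeries_of_modXPow {E : ι → ℕ} {w : ι → R} {f : R⟦X⟧} {s : ℕ → Finset ι}
    (hs : ∀ {M i}, E i < M → i ∈ s M)
    (h : ∀ M, modXPow M f = modXPow M (∑ i ∈ s M, C (w i) * X ^ E i)) :
    f = thetaSeries (fun i => (E i : ℤ)) w := by
  ext n
  have hsupp : (Function.support fun i => if (E i : ℤ) = n then w i else 0) ⊆ s (n + 1) :=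
    fun i hi => hs (Nat.lt_succ_of_le (Int.ofNat_le.mp (ite_ne_right_iff.mp hi).1.le))
  rw [modXPow_eq_iff_coeff.mp (h (n + 1)) n n.lt_succ_self, coeff_thetaSeries,
    finsum_eq_sum_of_support_subset _ hsupp, map_sum]
  refine Finset.sum_congr rfl fun i _ => ?_
  rw [coeff_C_mul, coeff_X_pow, mul_ite, mul_one, mul_zero]
  exact if_congr (by omega) rfl rfl

theorem X_pow_mul_thetaSeries {E : ι → ℤ} {w : ι → R} (hE : ∀ i, w i ≠ 0 → 0 ≤ E i) (a : ℕ) :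
    X ^ a * thetaSeries E w = thetaSeries (fun i => E i + a) w := by
  ext n
  simp only [coeff_X_pow_mul', coeff_thetaSeries]
  split_ifs with h
  · exact finsum_congr fun i => if_congr (by omega) rfl rfl
  · refine (finsum_eq_zero_of_forall_eq_zero fun i => ite_eq_right_iff.mpr fun hi => ?_).symm
    by_contra hw
    have := hE i hw
    omega

theorem expand_thetaSeries {p : ℕ} (hp : p ≠ 0) (E : ι → ℤ) (w : ι → R) :
    expand p hp (thetaSeries E w) = thetaSeries (fun i => p * E i) w := by
  ext n
  simp only [coeff_expand, coeff_thetaSeries]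
  split_ifs with h
  · obtain ⟨k, rfl⟩ := h
    rw [Nat.mul_div_cancel_left k (Nat.pos_of_ne_zero hp)]
    refine finsum_congr fun i => if_congr ?_ rfl rfl
    rw [Nat.cast_mul, mul_right_inj' (Nat.cast_ne_zero.mpr hp)]
  · refine (finsum_eq_zero_of_forall_eq_zero fun i => if_neg fun hi => h ?_).symm
    exact Int.natCast_dvd_natCast.mp ⟨E i, hi.symm⟩

theorem thetaSeries_eq_two_mul_comp {E : ι → ℤ} {w : ι → R} (h : IsAdmissible E w) {σ : ι → ι}
    (hσ : Function.Involutive σ) (hE : ∀ i, E (σ i) = E i) (hw : ∀ i, w (σ i) = w i) {e : κ → ι}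
    (he : Function.Injective e) (hcover : ∀ i, w i ≠ 0 → i ∈ Set.range e ∨ σ i ∈ Set.range e)
    (hdisj : ∀ k l, e k ≠ σ (e l)) : thetaSeries E w = 2 * thetaSeries (E ∘ e) (w ∘ e) := by
  classical
  set v : ι → R := (Set.range e).indicator w
  have hv : IsAdmissible E v := h.mono fun i hi => (Set.indicator_apply_ne_zero.mp hi).2
  have hvσ : IsAdmissible E (v ∘ σ) := h.mono fun i hi =>
    hw i ▸ (Set.indicator_apply_ne_zero.mp hi).2
  have hsplit : w = v + v ∘ σ := by
    funext i
    simp only [v, Pi.add_apply, Function.comp_apply, Set.indicator_apply, hw]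
    by_cases hi : i ∈ Set.range e <;> by_cases hσi : σ i ∈ Set.range e
    · obtain ⟨k, rfl⟩ := hi
      obtain ⟨l, hl⟩ := hσi
      exact absurd hl (hdisj l k)
    · rw [if_pos hi, if_neg hσi, add_zero]
    · rw [if_neg hi, if_pos hσi, zero_add]
    · rw [if_neg hi, if_neg hσi, add_zero]
      by_contra hwi
      exact (hcover i hwi).elim hi hσi
  have hve : v ∘ e = w ∘ e := funext fun k => Set.indicator_of_mem (Set.mem_range_self k) w
  conv_lhs => rw [hsplit]
  rw [thetaSeries_add hv hvσ, thetaSeries_comp_involutive hσ hE, ← two_mul, ← hve,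
    thetaSeries_comp_injective he Set.support_indicator_subset]

/-- The substitution `q ↦ q ^ 24`. -/
def dilate : ℤ⟦X⟧ →ₐ[ℤ] ℤ⟦X⟧ := expand 24 (by norm_num)

theorem X_pow_mul_dilate_thetaSeries (E : ι → ℕ) (w : ι → ℤ) (a : ℕ) :
    X ^ a * dilate (thetaSeries (fun i => (E i : ℤ)) w) =
      thetaSeries (fun i => 24 * (E i : ℤ) + a) w := by
  rw [dilate, expand_thetaSeries, X_pow_mul_thetaSeries fun i _ => by positivity]
  rfl

end Dilation

theorem two_mul_natCast_triangular (i : ℕ) : (2 * triangular i : ℤ) = i * (i + 1) := by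
  exact_mod_cast two_mul_triangular i

theorem χ₄_two_mul_add_one (n : ℕ) : χ₄ (2 * n + 1) = (-1) ^ n := by
  have h := ZMod.χ₄_eq_neg_one_pow (n := 2 * n + 1) (by omega)
  rw [show (2 * n + 1) / 2 = n by omega] at h
  rw [χ₄, ← h]
  push_cast
  rfl

theorem χ₁₂_six_mul_sub_one (k : ℤ) : χ₁₂ (6 * k - 1) = Int.negOnePow k := by
  have h₃ : (((6 * k - 1 : ℤ) : ZMod 3)) = -1 := by
    push_cast
    reduce_mod_char
  rw [χ₁₂, χ₃, h₃, χ₄, ZMod.χ₄_int_eq_if_mod_four]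
  rcases Int.even_or_odd' k with ⟨m, rfl | rfl⟩
  · rw [Int.negOnePow_even _ (even_two_mul m), if_neg (by omega), if_neg (by omega)]
    rfl
  · rw [Int.negOnePow_odd _ (odd_two_mul_add_one m), if_neg (by omega), if_pos (by omega)]
    rfl

theorem pentagonalSeries_eq_thetaSeries : pentagonalSeries ℤ =
    thetaSeries (fun k : ℤ => (pentagonal k : ℤ)) fun k => χ₁₂ (6 * k - 1) := by
  ext n
  rw [coeff_thetaSeries]
  by_cases h : n ∈ Set.range pentagonal
  · obtain ⟨k, rfl⟩ := h
    rw [coeff_pentagonalSeries_pentagonal, finsum_eq_single _ k, if_pos rfl, χ₁₂_six_mul_sub_one,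
      Int.cast_id]
    exact fun l hl => if_neg fun h => hl (pentagonal_injective (Nat.cast_injective h))
  · rw [coeff_pentagonalSeries_eq_zero _ h]
    exact (finsum_eq_zero_of_forall_eq_zero fun k =>
      if_neg fun hk => h ⟨k, Nat.cast_injective hk⟩).symm

theorem etaSeries_eq_two_mul : etaSeries = 2 * (X * dilate (pentagonalSeries ℤ)) := by
  rw [← pow_one X, pentagonalSeries_eq_thetaSeries, X_pow_mul_dilate_thetaSeries, etaSeries,
    thetaSeries_eq_two_mul_comp isAdmissible_χ₁₂ neg_involutive neg_sq χ₁₂_neg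
      (e := fun k : ℤ => 6 * k - 1) (fun _ _ h => by simpa using h) ?_ (fun k l => by omega)]
  · congr 2
    funext k
    simp only [Function.comp_apply, Nat.cast_one]
    linear_combination -12 * two_mul_natCast_pentagonal k
  · intro x hx
    have hmod := χ₁₂_ne_zero_imp hx
    have hcases : x % 6 = 5 ∨ x % 6 = 1 := by omega
    rcases hcases with h | h
    · exact .inl ⟨(x + 1) / 6, by dsimp only; omega⟩
    · exact .inr ⟨(-x + 1) / 6, by dsimp only; omega⟩

theorem pentagonalSeries_pow_three_eq_thetaSeries : pentagonalSeries ℤ ^ 3 =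
    thetaSeries (fun i : ℕ => (triangular i : ℤ)) fun i => (2 * (i : ℤ) + 1) * (-1) ^ i := by
  refine eq_thetaSeries_of_modXPow (s := fun M => Finset.range M)
    (fun h => Finset.mem_range.mpr ((le_triangular _).trans_lt h)) fun M => ?_
  rcases M with _ | M
  · rw [modXPow_eq_iff, pow_zero]
    exact one_dvd _
  · exact modXPow_pentagonalSeries_pow_three M

theorem etaCubeSeries_eq_two_mul :
    etaCubeSeries = 2 * (X * dilate (pentagonalSeries ℤ)) ^ 3 := by
  rw [mul_pow, ← map_pow, pentagonalSeries_pow_three_eq_thetaSeries, X_pow_mul_dilate_thetaSeries,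
    etaCubeSeries, thetaSeries_eq_two_mul_comp isAdmissible_χ₄_mul
      neg_involutive (fun b => by rw [neg_sq]) (fun b => by rw [χ₄_neg, neg_mul_neg])
      (e := fun i : ℕ => 2 * (i : ℤ) + 1) (fun i j h => by simpa using h) ?_ (fun k l => by omega)]
  · congr 2 <;> funext i
    · simp only [Function.comp_apply, Nat.cast_ofNat]
      linear_combination -12 * two_mul_natCast_triangular i
    · simp only [Function.comp_apply, χ₄_two_mul_add_one]
      ring
  · intro b hb
    have hodd := odd_of_χ₄_ne_zero (left_ne_zero_of_mul hb)
    rcases le_total 0 b with h | h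
    · exact .inl ⟨(b / 2).toNat, by dsimp only; omega⟩
    · exact .inr ⟨(-b / 2).toNat, by dsimp only; omega⟩

/-- The parametrization of the positive half of the cone `0 < d * (b - 2 * d)` by the summation
indices of the Hecke-type double sum: `b - 2 * d = 2 * p.1 + 1` and `d = 2 * p.2 + 1`. -/
def heckePoint (p : ℕ × ℕ) : ℤ × ℤ := (2 * p.1 + 1 + 2 * (2 * p.2 + 1), 2 * p.2 + 1)

theorem heckeWeight_heckePoint (p : ℕ × ℕ) :
    heckeWeight (heckePoint p) = -2 * ((2 * p.1 + 1) * (-1) ^ (p.1 + p.2)) := by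
  have hb : (2 * p.1 + 1 + 2 * (2 * p.2 + 1) : ℤ) = 2 * (p.1 + 2 * p.2 + 1 : ℕ) + 1 := by
    push_cast
    ring
  have hχ : χ₄ (2 * p.1 + 1 + 2 * (2 * p.2 + 1)) = (-1) ^ (p.1 + 1) := by
    rw [hb, χ₄_two_mul_add_one, add_right_comm, pow_add, pow_mul, neg_one_sq, one_pow, mul_one]
  rw [heckeWeight, heckePoint, hχ, χ₄_two_mul_add_one, add_sub_cancel_right,
    Int.sign_eq_one_of_pos (by positivity), Int.sign_eq_one_of_pos (by positivity)]
  ring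

theorem heckePoint_injective : Function.Injective heckePoint := by
  rintro ⟨i, j⟩ ⟨k, l⟩ h
  simp only [heckePoint, Prod.mk.injEq] at h ⊢
  omega

theorem heckePoint_ne_neg (p q : ℕ × ℕ) : heckePoint p ≠ -heckePoint q := by
  intro h
  have := congrArg Prod.snd h
  simp only [heckePoint, Prod.snd_neg] at this
  omega

theorem heckeWeight_neg (p : ℤ × ℤ) : heckeWeight (-p) = heckeWeight p := by
  simp only [heckeWeight, Prod.fst_neg, Prod.snd_neg, χ₄_neg, Int.sign_neg,
    show -p.1 - 2 * -p.2 = -(p.1 - 2 * p.2) by ring]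
  ring

theorem mem_range_heckePoint (p : ℤ × ℤ) (h : heckeWeight p ≠ 0) :
    p ∈ Set.range heckePoint ∨ -p ∈ Set.range heckePoint := by
  obtain ⟨b, d⟩ := p
  have hb := odd_of_χ₄_ne_zero (left_ne_zero_of_mul (left_ne_zero_of_mul h))
  have hd := odd_of_χ₄_ne_zero (right_ne_zero_of_mul (left_ne_zero_of_mul h))
  simp only at hb hd
  rcases mul_pos_iff.mp (mul_pos_of_heckeWeight_ne_zero h) with h | h
  · refine .inl ⟨(((b - 2 * d) / 2).toNat, (d / 2).toNat), ?_⟩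
    simp only [heckePoint, Prod.mk.injEq]
    omega
  · refine .inr ⟨((-(b - 2 * d) / 2).toNat, (-d / 2).toNat), ?_⟩
    simp only [heckePoint, Prod.neg_mk, Prod.mk.injEq]
    omega

theorem neg_two_mul_pentagonalSeries_pow_three_mul_sTSeries :
    -2 * (pentagonalSeries ℤ ^ 3 * sTSeries) =
      thetaSeries (fun p => (heckeExponent p : ℤ)) (heckeWeight ∘ heckePoint) := by
  refine eq_thetaSeries_of_modXPow (s := fun M => Finset.range M ×ˢ Finset.range M) ?_ fun M => ?_
  · rintro M ⟨i, j⟩ h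
    have hi := le_triangular i
    have hj := le_triangular j
    rw [heckeExponent] at h
    simp only [Finset.mem_product, Finset.mem_range]
    constructor <;> nlinarith
  · rw [pow_succ, mul_assoc, map_mul, map_mul, modXPow_pentagonalSeries_mul_sTSeries, ← map_mul,
      modXPow_pentagonalSeries_sq_mul_smallestPartSum, ← map_mul, Finset.mul_sum]
    congr 1
    refine Finset.sum_congr rfl fun p _ => ?_
    rw [Function.comp_apply, heckeWeight_heckePoint, map_mul _ (-2), map_neg, map_ofNat C 2,
      mul_assoc]

theorem X_pow_nine_mul_heckeSeries : X ^ 9 * heckeSeries =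
    2 * (X ^ 3 * dilate (thetaSeries (fun p => (heckeExponent p : ℤ))
      (heckeWeight ∘ heckePoint))) := by
  rw [heckeSeries, thetaSeries_eq_two_mul_comp isAdmissible_heckeWeight neg_involutive
      (fun p => by simp only [Prod.fst_neg, Prod.snd_neg, neg_sq]) heckeWeight_neg
      heckePoint_injective mem_range_heckePoint heckePoint_ne_neg, mul_left_comm,
    X_pow_mul_dilate_thetaSeries,
    X_pow_mul_thetaSeries (isAdmissible_heckeWeight.comp_injective heckePoint_injective).nonneg]
  congr 2
  funext ⟨i, j⟩
  simp only [Function.comp_apply, heckePoint, heckeExponent]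
  push_cast
  linear_combination -12 * two_mul_natCast_triangular i - 12 * two_mul_natCast_triangular j

theorem etaSeries_pow_three_mul_dilate_sTSeries :
    etaSeries ^ 3 * dilate sTSeries = -2 * (X ^ 9 * heckeSeries) := by
  rw [X_pow_nine_mul_heckeSeries, ← neg_two_mul_pentagonalSeries_pow_three_mul_sTSeries,
    etaSeries_eq_two_mul]
  simp only [map_mul, map_pow, map_neg, map_ofNat dilate 2]
  ring

theorem two_mul_etaSeries_mul_dilate_sTSeries :
    2 * (etaSeries * dilate sTSeries) = X ^ 9 * coneSeries := by
  have hcube : etaSeries ^ 3 = 4 * etaCubeSeries := by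
    rw [etaSeries_eq_two_mul, etaCubeSeries_eq_two_mul]
    ring
  refine mul_left_cancel₀ (pow_ne_zero 3 etaSeries_ne_zero) ?_
  linear_combination 2 * etaSeries * etaSeries_pow_three_mul_dilate_sTSeries -
    4 * X ^ 9 * etaSeries_mul_heckeSeries - X ^ 9 * coneSeries * hcube

theorem residuePart_two_map_dilate_sTSeries :
    residuePart (2 : ZMod 5) (map (Int.castRingHom (ZMod 5)) (dilate sTSeries)) = 0 := by
  have hcone := congrArg (map (Int.castRingHom (ZMod 5))) two_mul_etaSeries_mul_dilate_sTSeries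
  have hhecke := congrArg (map (Int.castRingHom (ZMod 5))) etaSeries_pow_three_mul_dilate_sTSeries
  simp only [map_mul, map_pow, map_X, map_neg, map_ofNat (map (Int.castRingHom (ZMod 5))) 2,
    map_etaSeries, map_coneSeries] at hcone hhecke
  exact residuePart_two_eq_zero hcone hhecke

theorem sT_five_n_plus_three_mod_five (n : ℕ) : 5 ∣ sT (5 * n + 3) := by
  have hres : ((24 * (5 * n + 3) : ℕ) : ZMod 5) = 2 := by
    push_cast
    reduce_mod_char
  have hcoeff := congrArg (coeff (24 * (5 * n + 3))) residuePart_two_map_dilate_sTSeries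
  rw [coeff_residuePart, if_pos hres, coeff_map, dilate, coeff_expand_mul, sTSeries, coeff_mk,
    map_zero, eq_intCast, Int.cast_natCast] at hcoeff
  exact (ZMod.natCast_eq_zero_iff _ _).mp hcoeff
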